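/- arXiv:1504.03548 — 5 statements merged into one kernel-verified Lean document; each statement's English description precedes it below -/
import Mathlib

section
/- Let C be a connected graded k-coalgebra, and let Δⁿ : Cₙ → C₁^{⊗n} be defined by Δ¹ = id_{C₁} and Δⁿ = (id_{C₁} ⊗ Δⁿ⁻¹)∘Δ_{1,n−1} for n ≥ 2. Then the following are equivalent: (i) C is strongly graded, i.e., Δ_{p,q} is injective for all p,q ≥ 0; (ii) Δⁿ is injective for all n ≥ 2; (iii) Δ_{1,n} is injective for all n ≥ 1; (iv) Δ_{n,1} is injective for all n ≥ 1. -/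
/-!
The components of the comultiplication are `Δ_{p,q} = (π_p ⊗ π_q) ∘ Δ`, where `π_n` is the
projection onto degree `n`, so coassociativity of `Δ` yields
`(Δ_{p,q} ⊗ id) ∘ Δ_{p+q,r} = (id ⊗ Δ_{q,r}) ∘ Δ_{p,q+r}`.
Tensoring with a flat module preserves injectivity. Hence `Δ_{p+q,r}` is injective as soon as
`Δ_{p,q+r}` and `Δ_{q,r}` are, and `Δ_{p,q+r}` is injective as soon as `Δ_{p+q,r}` and `Δ_{p,q}`
are. The counit makes `Δ_{0,n}` and `Δ_{n,0}` injective, so all `Δ_{p,q}` are injective if all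
`Δ_{1,n}` are (induction on `p`) or if all `Δ_{n,1}` are (induction on `q`).
Finally, `Δⁿ⁺¹ = (id ⊗ Δⁿ) ∘ Δ_{1,n}`: its injectivity forces that of `Δ_{1,n}`, and the converse
follows by induction on `n`.
-/

open TensorProduct

noncomputable section
namespace Koszul

variable (k : Type) [Field k]

/-- Iterated tensor powers: `TP V 0 = k`, `TP V 1 = V`, `TP V (n+2) = V ⊗ TP V (n+1)`. -/
def TP (V : Type) [AddCommGroup V] [Module k V] : ℕ → ModuleCat k
  | 0 => ModuleCat.of k k
  | 1 => ModuleCat.of k V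
  | (n+2) => ModuleCat.of k (V ⊗[k] (TP V (n+1)))

variable (C : Type) [AddCommGroup C] [Module k C] [Coalgebra k C]
variable (𝒞 : ℕ → Submodule k C)

/-- The data exhibiting `C = ⊕ₙ Cₙ` as a connected graded coalgebra: a grouplike element `g`
spanning `C₀`, the counit vanishing in positive degrees, and the components
`Δc p q : C_{p+q} → C_p ⊗ C_q` of the comultiplication (extended by `0` to the other
homogeneous components of `C`). -/
structure GradedCoalgebraData where
  g : C
  Δc : ∀ p q : ℕ, C →ₗ[k] (↥(𝒞 p) ⊗[k] ↥(𝒞 q))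
  hC0 : 𝒞 0 = Submodule.span k {g}
  hgrp : Coalgebra.comul (R := k) g = g ⊗ₜ[k] g
  hcu : Coalgebra.counit (R := k) g = 1
  hcounit : ∀ n, 1 ≤ n → ∀ x ∈ 𝒞 n, Coalgebra.counit (R := k) x = 0
  hΔc : ∀ n, ∀ x ∈ 𝒞 n, Coalgebra.comul (R := k) x =
    ∑ p ∈ Finset.range (n+1),
      (TensorProduct.map (𝒞 p).subtype (𝒞 (n-p)).subtype) (Δc p (n-p) x)
  hΔc0 : ∀ p q n, n ≠ p + q → ∀ x ∈ 𝒞 n, Δc p q x = 0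

/-- `C` is strongly graded: every component `Δ_{p,q} : C_{p+q} → C_p ⊗ C_q` is injective. -/
def GradedCoalgebraData.Strong (D : GradedCoalgebraData k C 𝒞) : Prop :=
  ∀ p q : ℕ, ∀ x ∈ 𝒞 (p + q), D.Δc p q x = 0 → x = 0

/-- `Δ₊ : x ↦ Δ(x) - g ⊗ x - x ⊗ g`, the reduced comultiplication; on a homogeneous element
of positive degree `n` it equals the sum of the components `Δ_{p,q}` with `p, q ≥ 1`. -/
def deltaPlus (g : C) : C →ₗ[k] C ⊗[k] C :=
  Coalgebra.comul - (TensorProduct.mk k C C g) - ((TensorProduct.mk k C C).flip g)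

/-- `expand Δp n i` applies `Δp` to the `(i+1)`-st tensor factor of `C^{⊗(n+1)}`. -/
def expand (Δp : C →ₗ[k] C ⊗[k] C) : (n i : ℕ) → (↥(TP k C (n+1)) →ₗ[k] ↥(TP k C (n+2)))
  | 0, 0 => Δp
  | 0, (_+1) => 0
  | (n+1), 0 => (TensorProduct.assoc k C C ↥(TP k C (n+1))).toLinearMap.comp
      (LinearMap.rTensor ↥(TP k C (n+1)) Δp)
  | (n+1), (i+1) => LinearMap.lTensor C (expand Δp n i)

/-- The differential `dⁿ = Σ_{i=1}^{n} (-1)^{i-1} id ⊗ ⋯ ⊗ Δ₊ ⊗ ⋯ ⊗ id` of the normalized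
cobar complex (with `d⁰ = 0`). -/
def cobarD (Δp : C →ₗ[k] C ⊗[k] C) : (n : ℕ) → (↥(TP k C n) →ₗ[k] ↥(TP k C (n+1)))
  | 0 => 0
  | (n+1) => ∑ i ∈ Finset.range (n+1), ((-1:k)^i) • expand k C Δp n i

/-- `omega 𝒱 n m = ⊕_{𝐦 ∈ 𝒫ₙ(m)} V_{m₁} ⊗ ⋯ ⊗ V_{mₙ}`: the span, inside the `n`-th tensor
power, of tensors of homogeneous elements of positive degrees summing to `m`. -/
def omega {V : Type} [AddCommGroup V] [Module k V] (𝒱 : ℕ → Submodule k V) :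
    (n m : ℕ) → Submodule k ↥(TP k V n)
  | 0, m => if m = 0 then ⊤ else ⊥
  | 1, m => if m = 0 then ⊥ else 𝒱 m
  | (n+2), m => ⨆ p ∈ Finset.Icc 1 m,
      LinearMap.range (TensorProduct.map (𝒱 p).subtype (omega 𝒱 (n+1) (m-p)).subtype)

/-- `Ext_C^{n,m}(k,k) = Ker dⁿ_m / Im dⁿ⁻¹_m`, computed from the degree-`m` part of the
normalized cobar complex of `C` (for `n = 0` there is nothing to quotient by). -/
abbrev ExtGrp (Δp : C →ₗ[k] C ⊗[k] C) : (n m : ℕ) → Type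
  | 0, m => ↥(LinearMap.ker (cobarD k C Δp 0) ⊓ omega k 𝒞 0 m)
  | (n+1), m =>
      ↥(LinearMap.ker (cobarD k C Δp (n+1)) ⊓ omega k 𝒞 (n+1) m) ⧸
        (Submodule.comap (LinearMap.ker (cobarD k C Δp (n+1)) ⊓ omega k 𝒞 (n+1) m).subtype
          (Submodule.map (cobarD k C Δp n) (omega k 𝒞 n m)))

variable [DirectSum.Decomposition 𝒞]

/-- The iterated comultiplication `Δ(m) : Cₘ → C₁^{⊗m}`, `Δ(1) = id` (realized on all of `C`
via the projection onto `C₁`) and `Δ(m) = (id ⊗ Δ(m-1)) ∘ Δ_{1,m-1}`. -/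
def deltaIter (D : GradedCoalgebraData k C 𝒞) : (m : ℕ) → (C →ₗ[k] ↥(TP k ↥(𝒞 1) m))
  | 0 => 0
  | 1 => (DirectSum.component k ℕ (fun i => ↥(𝒞 i)) 1).comp
      (DirectSum.decomposeLinearEquiv 𝒞).toLinearMap
  | (n+2) => (TensorProduct.map LinearMap.id ((deltaIter D (n+1)).comp (𝒞 (n+1)).subtype)).comp
      (D.Δc 1 (n+1))

section GradedModule

variable {ι R M N : Type*} [DecidableEq ι] [Semiring R] [AddCommMonoid M] [Module R M]
  [AddCommMonoid N] [Module R N] (ℳ : ι → Submodule R M) [DirectSum.Decomposition ℳ]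

/-- The projection of an internally graded module onto its component of degree `i`. -/
def gradedProj (i : ι) : M →ₗ[R] ℳ i :=
  DirectSum.component R ι (fun i => ℳ i) i ∘ₗ (DirectSum.decomposeLinearEquiv ℳ).toLinearMap

variable {ℳ}

lemma gradedProj_coe {i : ι} (x : ℳ i) : gradedProj ℳ i x = x :=
  Subtype.ext (DirectSum.decompose_of_mem_same ℳ x.2)

lemma gradedProj_coe_of_ne {i j : ι} (h : i ≠ j) (x : ℳ i) : gradedProj ℳ j x = 0 :=
  Subtype.ext (DirectSum.decompose_of_mem_ne ℳ x.2 h)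

lemma gradedProj_comp_subtype (i : ι) : gradedProj ℳ i ∘ₗ (ℳ i).subtype = LinearMap.id :=
  LinearMap.ext gradedProj_coe

lemma gradedProj_comp_subtype_of_ne {i j : ι} (h : i ≠ j) :
    gradedProj ℳ j ∘ₗ (ℳ i).subtype = 0 :=
  LinearMap.ext (gradedProj_coe_of_ne h)

lemma injOn_gradedProj (i : ι) : Set.InjOn (gradedProj ℳ i) (ℳ i) := by
  intro x hx y hy h
  simpa only [gradedProj_coe (ℳ := ℳ) ⟨x, hx⟩, gradedProj_coe (ℳ := ℳ) ⟨y, hy⟩,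
    Subtype.mk.injEq] using h

lemma comp_subtype_comp_gradedProj {f : M →ₗ[R] N} {i : ι}
    (hf : ∀ j ≠ i, ∀ x ∈ ℳ j, f x = 0) : (f ∘ₗ (ℳ i).subtype) ∘ₗ gradedProj ℳ i = f := by
  refine DirectSum.decompose_lhom_ext ℳ fun j => ?_
  obtain rfl | hj := eq_or_ne j i
  · rw [LinearMap.comp_assoc, gradedProj_comp_subtype, LinearMap.comp_id]
  · rw [LinearMap.comp_assoc, gradedProj_comp_subtype_of_ne hj, LinearMap.comp_zero]
    exact LinearMap.ext fun x => (hf j hj x x.2).symm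

end GradedModule

section TensorProduct

variable {ι κ R M N : Type*} [DecidableEq ι] [DecidableEq κ] [CommSemiring R]
  [AddCommMonoid M] [Module R M] [AddCommMonoid N] [Module R N]
  {ℳ : ι → Submodule R M} [DirectSum.Decomposition ℳ]
  {𝒩 : κ → Submodule R N} [DirectSum.Decomposition 𝒩]

lemma map_gradedProj_mapIncl {i : ι} {j : κ} (t : ℳ i ⊗[R] 𝒩 j) :
    TensorProduct.map (gradedProj ℳ i) (gradedProj 𝒩 j)
      (TensorProduct.mapIncl (ℳ i) (𝒩 j) t) = t := by
  rw [TensorProduct.mapIncl, TensorProduct.map_map, gradedProj_comp_subtype,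
    gradedProj_comp_subtype, TensorProduct.map_id, LinearMap.id_apply]

lemma map_gradedProj_mapIncl_of_ne {i i' : ι} {j j' : κ} (h : i ≠ i' ∨ j ≠ j')
    (t : ℳ i ⊗[R] 𝒩 j) :
    TensorProduct.map (gradedProj ℳ i') (gradedProj 𝒩 j')
      (TensorProduct.mapIncl (ℳ i) (𝒩 j) t) = 0 := by
  rw [TensorProduct.mapIncl, TensorProduct.map_map]
  obtain hi | hj := h
  · rw [gradedProj_comp_subtype_of_ne hi, TensorProduct.map_zero_left, LinearMap.zero_apply]
  · rw [gradedProj_comp_subtype_of_ne hj, TensorProduct.map_zero_right, LinearMap.zero_apply]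

end TensorProduct

section TensorPower

variable (R M : Type*) [CommSemiring R] [AddCommMonoid M] [Module R M]

/-- The isomorphism `M ≃ M^{⊗1}`. -/
def tensorPowerOne : M ≃ₗ[R] ⨂[R]^1 M :=
  (PiTensorProduct.subsingletonEquiv (s := fun _ : Fin 1 => M) 0).symm

/-- The isomorphism `M ⊗ M^{⊗n} ≃ M^{⊗(n+1)}` prepending a tensor factor. -/
def tensorPowerCons (n : ℕ) : M ⊗[R] (⨂[R]^n M) ≃ₗ[R] ⨂[R]^(n + 1) M :=
  (tensorPowerOne R M).rTensor (⨂[R]^n M) ≪≫ₗ TensorPower.mulEquiv ≪≫ₗ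
    TensorPower.cast R M (add_comm 1 n)

end TensorPower

section GradedCoalgebra

variable {ι R A : Type*} [AddMonoid ι] [DecidableEq ι] [CommSemiring R] [AddCommMonoid A]
  [Module R A] [Coalgebra R A] (𝒜 : ι → Submodule R A)

/-- An internal grading `𝒜` makes the coalgebra `A` a graded coalgebra if
`Δ(Aₙ) ⊆ Σ_{p+q=n} A_p ⊗ A_q` and the counit vanishes in nonzero degrees. -/
class IsGradedCoalgebra : Prop where
  comul_mem {n : ι} {x : A} (hx : x ∈ 𝒜 n) : Coalgebra.comul (R := R) x ∈
    ⨆ (p : ι) (q : ι) (_ : p + q = n), LinearMap.range (TensorProduct.mapIncl (𝒜 p) (𝒜 q))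
  counit_eq_zero {n : ι} (hn : n ≠ 0) {x : A} (hx : x ∈ 𝒜 n) : Coalgebra.counit (R := R) x = 0

variable [DirectSum.Decomposition 𝒜]

/-- The component `Δ_{p,q}` of the comultiplication, extended by zero to the homogeneous
elements whose degree is not `p + q`. -/
def comulComponent (p q : ι) : A →ₗ[R] 𝒜 p ⊗[R] 𝒜 q :=
  TensorProduct.map (gradedProj 𝒜 p) (gradedProj 𝒜 q) ∘ₗ Coalgebra.comul

variable {𝒜} [IsGradedCoalgebra 𝒜]

lemma comulComponent_eq_zero {p q n : ι} (hn : n ≠ p + q) {x : A} (hx : x ∈ 𝒜 n) :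
    comulComponent 𝒜 p q x = 0 := by
  suffices h : (⨆ (p' : ι) (q' : ι) (_ : p' + q' = n),
      LinearMap.range (TensorProduct.mapIncl (𝒜 p') (𝒜 q'))) ≤
      LinearMap.ker (TensorProduct.map (gradedProj 𝒜 p) (gradedProj 𝒜 q)) from
    h (IsGradedCoalgebra.comul_mem hx)
  refine iSup_le fun p' => iSup_le fun q' => iSup_le fun hn' => ?_
  rintro _ ⟨t, rfl⟩
  refine map_gradedProj_mapIncl_of_ne ?_ t
  by_contra! h
  exact hn (by rw [← hn', h.1, h.2])

variable (𝒜) in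
lemma comulComponent_comp_subtype_comp_gradedProj (p q : ι) :
    (comulComponent 𝒜 p q ∘ₗ (𝒜 (p + q)).subtype) ∘ₗ gradedProj 𝒜 (p + q) =
      comulComponent 𝒜 p q :=
  comp_subtype_comp_gradedProj fun _ hn _ hx => comulComponent_eq_zero hn hx

variable (𝒜) in
lemma counit_comp_subtype_comp_gradedProj :
    (Coalgebra.counit (R := R) (A := A) ∘ₗ (𝒜 0).subtype) ∘ₗ gradedProj 𝒜 0 =
      Coalgebra.counit :=
  comp_subtype_comp_gradedProj fun _ hn _ hx => IsGradedCoalgebra.counit_eq_zero hn hx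

lemma rTensor_comulComponent_comp_comulComponent (p q r : ι) :
    LinearMap.rTensor (𝒜 r) (comulComponent 𝒜 p q ∘ₗ (𝒜 (p + q)).subtype) ∘ₗ
        comulComponent 𝒜 (p + q) r =
      TensorProduct.map (TensorProduct.map (gradedProj 𝒜 p) (gradedProj 𝒜 q))
        (gradedProj 𝒜 r) ∘ₗ LinearMap.rTensor A Coalgebra.comul ∘ₗ Coalgebra.comul := by
  rw [comulComponent.eq_def 𝒜 (p + q) r, ← LinearMap.comp_assoc, ← LinearMap.comp_assoc,
    LinearMap.rTensor_comp_map, LinearMap.map_comp_rTensor,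
    comulComponent_comp_subtype_comp_gradedProj, comulComponent]

lemma lTensor_comulComponent_comp_comulComponent (p q r : ι) :
    LinearMap.lTensor (𝒜 p) (comulComponent 𝒜 q r ∘ₗ (𝒜 (q + r)).subtype) ∘ₗ
        comulComponent 𝒜 p (q + r) =
      TensorProduct.map (gradedProj 𝒜 p) (TensorProduct.map (gradedProj 𝒜 q)
        (gradedProj 𝒜 r)) ∘ₗ LinearMap.lTensor A Coalgebra.comul ∘ₗ Coalgebra.comul := by
  rw [comulComponent.eq_def 𝒜 p (q + r), ← LinearMap.comp_assoc, ← LinearMap.comp_assoc,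
    LinearMap.lTensor_comp_map, LinearMap.map_comp_lTensor,
    comulComponent_comp_subtype_comp_gradedProj, comulComponent]

theorem comulComponent_coassoc (p q r : ι) :
    (TensorProduct.assoc R (𝒜 p) (𝒜 q) (𝒜 r)).toLinearMap ∘ₗ
        LinearMap.rTensor (𝒜 r) (comulComponent 𝒜 p q ∘ₗ (𝒜 (p + q)).subtype) ∘ₗ
          comulComponent 𝒜 (p + q) r =
      LinearMap.lTensor (𝒜 p) (comulComponent 𝒜 q r ∘ₗ (𝒜 (q + r)).subtype) ∘ₗ
        comulComponent 𝒜 p (q + r) := by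
  rw [rTensor_comulComponent_comp_comulComponent, lTensor_comulComponent_comp_comulComponent,
    ← Coalgebra.coassoc, ← LinearMap.comp_assoc, ← TensorProduct.map_map_comp_assoc_eq,
    LinearMap.comp_assoc]

lemma rTensor_counit_comulComponent (n : ι) (x : A) :
    LinearMap.rTensor (𝒜 n) (Coalgebra.counit ∘ₗ (𝒜 0).subtype) (comulComponent 𝒜 0 n x) =
      (1 : R) ⊗ₜ gradedProj 𝒜 n x := by
  rw [comulComponent, LinearMap.comp_apply, LinearMap.rTensor_map,
    counit_comp_subtype_comp_gradedProj, ← LinearMap.lTensor_comp_rTensor, LinearMap.comp_apply,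
    Coalgebra.rTensor_counit_comul, LinearMap.lTensor_tmul]

lemma lTensor_counit_comulComponent (n : ι) (x : A) :
    LinearMap.lTensor (𝒜 n) (Coalgebra.counit ∘ₗ (𝒜 0).subtype) (comulComponent 𝒜 n 0 x) =
      gradedProj 𝒜 n x ⊗ₜ (1 : R) := by
  rw [comulComponent, LinearMap.comp_apply, LinearMap.lTensor_map,
    counit_comp_subtype_comp_gradedProj, ← LinearMap.rTensor_comp_lTensor, LinearMap.comp_apply,
    Coalgebra.lTensor_counit_comul, LinearMap.rTensor_tmul]

lemma injOn_comulComponent_zero_left (n : ι) : Set.InjOn (comulComponent 𝒜 0 n) (𝒜 n) := by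
  intro x hx y hy hxy
  refine injOn_gradedProj n hx hy ((TensorProduct.lid R (𝒜 n)).symm.injective ?_)
  simp only [TensorProduct.lid_symm_apply, ← rTensor_counit_comulComponent, hxy]

lemma injOn_comulComponent_zero_right (n : ι) : Set.InjOn (comulComponent 𝒜 n 0) (𝒜 n) := by
  intro x hx y hy hxy
  refine injOn_gradedProj n hx hy ((TensorProduct.rid R (𝒜 n)).symm.injective ?_)
  simp only [TensorProduct.rid_symm_apply, ← lTensor_counit_comulComponent, hxy]

lemma injOn_comulComponent_add_left {p q r : ι} [Module.Flat R (𝒜 p)]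
    (h₁ : Set.InjOn (comulComponent 𝒜 p (q + r)) (𝒜 (p + (q + r))))
    (h₂ : Set.InjOn (comulComponent 𝒜 q r) (𝒜 (q + r))) :
    Set.InjOn (comulComponent 𝒜 (p + q) r) (𝒜 (p + q + r)) := by
  have h_lTensor := Module.Flat.lTensor_preserves_injective_linearMap (M := 𝒜 p)
    (comulComponent 𝒜 q r ∘ₗ (𝒜 (q + r)).subtype) h₂.injective
  have h_comp := h_lTensor.comp_injOn h₁
  rw [← LinearMap.coe_comp, ← comulComponent_coassoc, ← LinearMap.comp_assoc,
    LinearMap.coe_comp, ← add_assoc] at h_comp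
  exact h_comp.of_comp

lemma injOn_comulComponent_add_right {p q r : ι} [Module.Flat R (𝒜 r)]
    (h₁ : Set.InjOn (comulComponent 𝒜 (p + q) r) (𝒜 (p + q + r)))
    (h₂ : Set.InjOn (comulComponent 𝒜 p q) (𝒜 (p + q))) :
    Set.InjOn (comulComponent 𝒜 p (q + r)) (𝒜 (p + (q + r))) := by
  have h_rTensor := Module.Flat.rTensor_preserves_injective_linearMap (M := 𝒜 r)
    (comulComponent 𝒜 p q ∘ₗ (𝒜 (p + q)).subtype) h₂.injective
  have h_comp := (TensorProduct.assoc R _ _ _).injective.comp_injOn (h_rTensor.comp_injOn h₁)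
  rw [← LinearMap.coe_comp, ← LinearEquiv.coe_toLinearMap, ← LinearMap.coe_comp,
    comulComponent_coassoc, LinearMap.coe_comp, add_assoc] at h_comp
  exact h_comp.of_comp

end GradedCoalgebra

section NatGraded

variable {R A : Type*} [CommSemiring R] [AddCommMonoid A] [Module R A] [Coalgebra R A]
  {𝒜 : ℕ → Submodule R A} [DirectSum.Decomposition 𝒜]

lemma injOn_comulComponent_of_one_left [IsGradedCoalgebra 𝒜] [Module.Flat R (𝒜 1)]
    (h : ∀ n, 1 ≤ n → Set.InjOn (comulComponent 𝒜 1 n) (𝒜 (1 + n))) (p q : ℕ) :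
    Set.InjOn (comulComponent 𝒜 p q) (𝒜 (p + q)) := by
  have h_one (n : ℕ) : Set.InjOn (comulComponent 𝒜 1 n) (𝒜 (1 + n)) :=
    n.eq_zero_or_pos.elim (fun hn => hn ▸ injOn_comulComponent_zero_right 1) (h n)
  induction p with
  | zero => simpa only [zero_add] using injOn_comulComponent_zero_left q
  | succ p ih => exact add_comm 1 p ▸ injOn_comulComponent_add_left (h_one (p + q)) ih

lemma injOn_comulComponent_of_one_right [IsGradedCoalgebra 𝒜] [Module.Flat R (𝒜 1)]
    (h : ∀ n, 1 ≤ n → Set.InjOn (comulComponent 𝒜 n 1) (𝒜 (n + 1))) (p q : ℕ) :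
    Set.InjOn (comulComponent 𝒜 p q) (𝒜 (p + q)) := by
  have h_one (n : ℕ) : Set.InjOn (comulComponent 𝒜 n 1) (𝒜 (n + 1)) :=
    n.eq_zero_or_pos.elim (fun hn => hn ▸ injOn_comulComponent_zero_left 1) (h n)
  induction q with
  | zero => exact injOn_comulComponent_zero_right p
  | succ q ih => exact injOn_comulComponent_add_right (h_one (p + q)) ih

variable (𝒜) in
/-- The iterated comultiplication `Δⁿ : Aₙ → A₁^{⊗n}`, extended by zero to the other homogeneous
elements; `Δ⁰` is the counit. -/
def iteratedComul : (n : ℕ) → A →ₗ[R] ⨂[R]^n (𝒜 1)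
  | 0 => TensorPower.algebraMap₀.toLinearMap ∘ₗ Coalgebra.counit
  | 1 => (tensorPowerOne R (𝒜 1)).toLinearMap ∘ₗ gradedProj 𝒜 1
  | n + 2 => (tensorPowerCons R (𝒜 1) (n + 1)).toLinearMap ∘ₗ
      LinearMap.lTensor (𝒜 1) (iteratedComul (n + 1) ∘ₗ (𝒜 (n + 1)).subtype) ∘ₗ
        comulComponent 𝒜 1 (n + 1)

lemma injOn_iteratedComul [Module.Flat R (𝒜 1)]
    (h : ∀ n, 1 ≤ n → Set.InjOn (comulComponent 𝒜 1 n) (𝒜 (1 + n))) {n : ℕ} (hn : 1 ≤ n) :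
    Set.InjOn (iteratedComul 𝒜 n) (𝒜 n) := by
  induction n, hn using Nat.le_induction with
  | base => exact (tensorPowerOne R (𝒜 1)).injective.comp_injOn (injOn_gradedProj 1)
  | succ n hn ih =>
    obtain ⟨m, rfl⟩ := Nat.exists_eq_add_of_le' hn
    have h_lTensor := Module.Flat.lTensor_preserves_injective_linearMap (M := 𝒜 1)
      (iteratedComul 𝒜 (m + 1) ∘ₗ (𝒜 (m + 1)).subtype) ih.injective
    have h_comul : Set.InjOn (comulComponent 𝒜 1 (m + 1)) (𝒜 (m + 2)) :=
      add_comm 1 (m + 1) ▸ h (m + 1) hn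
    exact (tensorPowerCons R (𝒜 1) (m + 1)).injective.comp_injOn (h_lTensor.comp_injOn h_comul)

lemma injOn_comulComponent_one_of_iteratedComul {n : ℕ} (hn : 1 ≤ n)
    (h : Set.InjOn (iteratedComul 𝒜 (n + 1)) (𝒜 (n + 1))) :
    Set.InjOn (comulComponent 𝒜 1 n) (𝒜 (1 + n)) := by
  obtain ⟨m, rfl⟩ := Nat.exists_eq_add_of_le' hn
  rw [iteratedComul, ← LinearMap.comp_assoc, LinearMap.coe_comp] at h
  exact add_comm (m + 1) 1 ▸ h.of_comp

theorem statement3_general (𝒜 : ℕ → Submodule R A) [DirectSum.Decomposition 𝒜]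
    [IsGradedCoalgebra 𝒜] [Module.Flat R (𝒜 1)] :
    List.TFAE [
      ∀ p q : ℕ, Set.InjOn (comulComponent 𝒜 p q) (𝒜 (p + q)),
      ∀ n : ℕ, 2 ≤ n → Set.InjOn (iteratedComul 𝒜 n) (𝒜 n),
      ∀ n : ℕ, 1 ≤ n → Set.InjOn (comulComponent 𝒜 1 n) (𝒜 (1 + n)),
      ∀ n : ℕ, 1 ≤ n → Set.InjOn (comulComponent 𝒜 n 1) (𝒜 (n + 1))] := by
  tfae_have 1 → 3 := fun h n _ => h 1 n
  tfae_have 1 → 4 := fun h n _ => h n 1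
  tfae_have 3 → 1 := injOn_comulComponent_of_one_left
  tfae_have 4 → 1 := injOn_comulComponent_of_one_right
  tfae_have 3 → 2 := fun h n hn => injOn_iteratedComul h (one_le_two.trans hn)
  tfae_have 2 → 3 := fun h n hn =>
    injOn_comulComponent_one_of_iteratedComul hn (h (n + 1) (Nat.succ_le_succ hn))
  tfae_finish

end NatGraded

/-- The identification of the recursive tensor power `TP` with Mathlib's. -/
def tpEquiv (V : Type) [AddCommGroup V] [Module k V] : (n : ℕ) → TP k V n ≃ₗ[k] ⨂[k]^n V
  | 0 => TensorPower.algebraMap₀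
  | 1 => tensorPowerOne k V
  | n + 2 => (tpEquiv V (n + 1)).lTensor V ≪≫ₗ tensorPowerCons k V (n + 1)

namespace GradedCoalgebraData

variable {k C 𝒞}

omit [DirectSum.Decomposition 𝒞] in
lemma isGradedCoalgebra (D : GradedCoalgebraData k C 𝒞) : IsGradedCoalgebra 𝒞 where
  comul_mem {n x} hx := by
    rw [D.hΔc n x hx]
    refine Submodule.sum_mem _ fun p hp => ?_
    refine Submodule.mem_iSup_of_mem p (Submodule.mem_iSup_of_mem (n - p) ?_)
    exact Submodule.mem_iSup_of_mem
      (Nat.add_sub_cancel' (Nat.lt_succ_iff.1 (Finset.mem_range.1 hp))) ⟨_, rfl⟩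
  counit_eq_zero hn _ hx := D.hcounit _ (Nat.one_le_iff_ne_zero.2 hn) _ hx

lemma Δc_eq_comulComponent (D : GradedCoalgebraData k C 𝒞) (p q : ℕ) :
    D.Δc p q = comulComponent 𝒞 p q := by
  have := D.isGradedCoalgebra
  refine DirectSum.decompose_lhom_ext 𝒞 fun n => LinearMap.ext fun x => ?_
  change D.Δc p q x = comulComponent 𝒞 p q x
  obtain rfl | hn := eq_or_ne n (p + q)
  · rw [comulComponent, LinearMap.comp_apply, D.hΔc _ x x.2, map_sum,
      Finset.sum_eq_single_of_mem p (Finset.mem_range.2 (by lia))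
        fun p' _ hp' => map_gradedProj_mapIncl_of_ne (.inl hp') _, Nat.add_sub_cancel_left]
    exact (map_gradedProj_mapIncl _).symm
  · rw [D.hΔc0 p q n hn x x.2, comulComponent_eq_zero hn x.2]

lemma tpEquiv_comp_deltaIter (D : GradedCoalgebraData k C 𝒞) {n : ℕ} (hn : 1 ≤ n) :
    (tpEquiv k (𝒞 1) n).toLinearMap ∘ₗ deltaIter k C 𝒞 D n = iteratedComul 𝒞 n := by
  induction n, hn using Nat.le_induction with
  | base => rfl
  | succ n hn ih =>
    obtain ⟨m, rfl⟩ := Nat.exists_eq_add_of_le' hn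
    rw [iteratedComul, ← ih, LinearMap.comp_assoc, LinearMap.lTensor_comp,
      ← D.Δc_eq_comulComponent]
    rfl

lemma deltaIter_eq_zero_iff (D : GradedCoalgebraData k C 𝒞) {n : ℕ} (hn : 1 ≤ n) (x : C) :
    deltaIter k C 𝒞 D n x = 0 ↔ iteratedComul 𝒞 n x = 0 := by
  rw [← D.tpEquiv_comp_deltaIter hn]
  exact (LinearEquiv.map_eq_zero_iff _).symm

end GradedCoalgebraData

/-- For a connected graded `k`-coalgebra `C`, with `Δⁿ : Cₙ → C₁^{⊗n}` the
iterated comultiplication, the following are equivalent: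
(i) `C` is strongly graded (all `Δ_{p,q}` injective);
(ii) `Δⁿ` is injective for all `n ≥ 2`;
(iii) `Δ_{1,n}` is injective for all `n ≥ 1`;
(iv) `Δ_{n,1}` is injective for all `n ≥ 1`. -/
theorem statement3 (D : GradedCoalgebraData k C 𝒞) :
    List.TFAE [
      ∀ p q : ℕ, ∀ x ∈ 𝒞 (p + q), D.Δc p q x = 0 → x = 0,
      ∀ n : ℕ, 2 ≤ n → ∀ x ∈ 𝒞 n, deltaIter k C 𝒞 D n x = 0 → x = 0,
      ∀ n : ℕ, 1 ≤ n → ∀ x ∈ 𝒞 (1 + n), D.Δc 1 n x = 0 → x = 0,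
      ∀ n : ℕ, 1 ≤ n → ∀ x ∈ 𝒞 (n + 1), D.Δc n 1 x = 0 → x = 0 ] := by
  have := D.isGradedCoalgebra
  simpa +contextual only [← LinearMap.disjoint_ker_iff_injOn, LinearMap.disjoint_ker,
    D.Δc_eq_comulComponent, fun n (hn : 2 ≤ n) => D.deltaIter_eq_zero_iff (one_le_two.trans hn)]
    using statement3_general 𝒞

end Koszul
end
end

section
/- Let π : B → A be a morphism of connected strongly graded k-algebras (a k-algebra homomorphism with π(Bⁿ) ⊆ Aⁿ for all n). Let m ≥ 2 be such that the components πⁱ : Bⁱ → Aⁱ are bijective for all 0 ≤ i < m and Tor^A_{2,m}(k,k) = 0. Then πᵐ : Bᵐ → Aᵐ is bijective. -/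
/-!
Vanishing of `Tor_{1,m}` means that every element of degree `m` is a sum of products of elements of
lower positive degrees; generation in degree one gives this for `A` and `B` when `m ≥ 2`. Hence `πᵐ`
is surjective, because `π` is surjective in the lower positive degrees.

For injectivity, `Tor_{2,m} = 0` says that the product of `A` is universal in degree `m`: every
pairing `Φ` on `A` with `Φ (ab, c) = Φ (a, bc)` in total degree `m` is of the form
`Φ (a, a') = s (aa')` for some linear map `s`. Let `σ : A → B` be a linear map inverting `π` in the
positive degrees below `m`. There `σ` is multiplicative as long as the degree of the product stays
below `m`, so `Φ (a, a') = σ a * σ a'` is such a pairing, and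
`s (π (bb')) = σ (π b) * σ (π b') = bb'` shows that `s` is a left inverse of `π` on `Bᵐ`.
-/

open TensorProduct

noncomputable section
namespace Koszul

variable (k : Type) [Field k]

variable (A : Type) [Ring A] [Algebra k A]

/-- `contract n i` multiplies the `(i+1)`-st and `(i+2)`-nd tensor factors of `A^{⊗(n+2)}`. -/
def contract : (n i : ℕ) → (↥(TP k A (n+2)) →ₗ[k] ↥(TP k A (n+1)))
  | 0, 0 => LinearMap.mul' k A
  | 0, (_+1) => 0
  | (n+1), 0 =>
      (TensorProduct.map (LinearMap.mul' k A) LinearMap.id).comp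
        (TensorProduct.assoc k A A ↥(TP k A (n+1))).symm.toLinearMap
  | (n+1), (i+1) => LinearMap.lTensor A (contract n i)

/-- The differential of the normalized bar complex,
`d(a₁⊗⋯⊗aₙ) = Σ_{i=1}^{n-1} (-1)^{i-1} a₁⊗⋯⊗aᵢaᵢ₊₁⊗⋯⊗aₙ`. -/
def barD : (n : ℕ) → (↥(TP k A n) →ₗ[k] ↥(TP k A (n-1)))
  | 0 => 0
  | 1 => 0
  | (n+2) => ∑ i ∈ Finset.range (n+1), ((-1:k)^i) • contract k A n i

variable (𝒜 : ℕ → Submodule k A)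

/-- `Tor^A_{n,m}(k,k) = Ker dₙᵐ / Im dₙ₊₁ᵐ`, computed from the degree-`m` part of the
normalized bar complex. -/
abbrev Tor (n m : ℕ) : Type :=
  ↥(LinearMap.ker (barD k A n) ⊓ omega k 𝒜 n m) ⧸
    (Submodule.comap (LinearMap.ker (barD k A n) ⊓ omega k 𝒜 n m).subtype
      (Submodule.map (barD k A (n+1)) (omega k 𝒜 (n+1) m)))

variable (B : Type) [Ring B] [Algebra k B]

section LinearAlgebra

variable {K V W U : Type*} [DivisionRing K] [AddCommGroup V] [Module K V]
  [AddCommGroup W] [Module K W] [AddCommGroup U] [Module K U]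

lemma exists_linearMap_comp_eqOn {f : V →ₗ[K] W} {g : V →ₗ[K] U} {p : Submodule K V}
    (h : LinearMap.ker f ⊓ p ≤ LinearMap.ker g) : ∃ s : W →ₗ[K] U, ∀ v ∈ p, s (f v) = g v := by
  have hker : LinearMap.ker (f.domRestrict p) ≤ LinearMap.ker (g.domRestrict p) :=
    fun v hv => h ⟨hv, v.2⟩
  obtain ⟨s, hs⟩ := ((Submodule.liftQ _ (g.domRestrict p) hker) ∘ₗ
    (f.domRestrict p).quotKerEquivRange.symm.toLinearMap).exists_extend
  refine ⟨s, fun v hv => ?_⟩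
  have hsv := LinearMap.congr_fun hs ⟨_, LinearMap.mem_range_self (f.domRestrict p) ⟨v, hv⟩⟩
  rwa [LinearMap.comp_apply, LinearMap.comp_apply, LinearEquiv.coe_coe,
    LinearMap.quotKerEquivRange_symm_apply_image] at hsv

lemma exists_linearMap_extending_graded {ι R M N : Type*} [DecidableEq ι] [Semiring R]
    [AddCommMonoid M] [Module R M] [AddCommMonoid N] [Module R N] (ℳ : ι → Submodule R M)
    [DirectSum.Decomposition ℳ] (f : ∀ i, ℳ i →ₗ[R] N) :
    ∃ g : M →ₗ[R] N, ∀ i (x : ℳ i), g x = f i x :=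
  ⟨DirectSum.toModule R ι N f ∘ₗ (DirectSum.decomposeLinearEquiv ℳ).toLinearMap,
    fun i x => by simp⟩

lemma exists_linearMap_leftInvOn_graded {ι : Type*} [DecidableEq ι] (𝒱 : ι → Submodule K V)
    [DirectSum.Decomposition 𝒱] {𝒲 : ι → Submodule K W} {f : W →ₗ[K] V} {s : Set ι}
    (hmaps : ∀ i ∈ s, Set.MapsTo f (𝒲 i) (𝒱 i)) (hinj : ∀ i ∈ s, Set.InjOn f (𝒲 i)) :
    ∃ σ : V →ₗ[K] W, ∀ i ∈ s, Set.LeftInvOn σ f (𝒲 i) := by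
  have hcomponent : ∀ i, ∃ τ : V →ₗ[K] W, i ∈ s → Set.LeftInvOn τ f (𝒲 i) := by
    intro i
    by_cases hi : i ∈ s
    · have hker : LinearMap.ker f ⊓ 𝒲 i ≤ LinearMap.ker LinearMap.id := fun w ⟨hfw, hw⟩ =>
        hinj i hi hw (𝒲 i).zero_mem (hfw.trans (map_zero f).symm)
      obtain ⟨τ, hτ⟩ := exists_linearMap_comp_eqOn hker
      exact ⟨τ, fun _ => hτ⟩
    · exact ⟨0, fun h => absurd h hi⟩
  choose τ hτ using hcomponent
  obtain ⟨σ, hσ⟩ := exists_linearMap_extending_graded 𝒱 fun i => τ i ∘ₗ (𝒱 i).subtype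
  exact ⟨σ, fun i hi w hw => (hσ i ⟨f w, hmaps i hi hw⟩).trans (hτ i hi hw)⟩

end LinearAlgebra

lemma bijective_restrict_iff_bijOn {α β : Type*} {f : α → β} {s : Set α} {t : Set β}
    (h : Set.MapsTo f s t) : Function.Bijective (h.restrict f s t) ↔ Set.BijOn f s t :=
  ⟨fun hf => ⟨h, h.restrict_inj.1 hf.1, h.restrict_surjective_iff.1 hf.2⟩, Set.BijOn.bijective⟩

section Decomposables

variable {R A B : Type*} [CommSemiring R] [Semiring A] [Algebra R A] [Semiring B] [Algebra R B]

/-- The decomposable elements of degree `m` of a graded algebra: the span of all products of two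
homogeneous elements of positive degrees with sum `m`. -/
def decomposables (𝒜 : ℕ → Submodule R A) (m : ℕ) : Submodule R A :=
  ⨆ (p : ℕ) (q : ℕ) (_ : 0 < p ∧ 0 < q ∧ p + q = m), 𝒜 p * 𝒜 q

variable {𝒜 : ℕ → Submodule R A} {ℬ : ℕ → Submodule R B} {m : ℕ}

lemma decomposables_le_iff {N : Submodule R A} :
    decomposables 𝒜 m ≤ N ↔
      ∀ p q, 0 < p → 0 < q → p + q = m → ∀ a ∈ 𝒜 p, ∀ b ∈ 𝒜 q, a * b ∈ N := by
  simp only [decomposables, iSup_le_iff, Submodule.mul_le, and_imp]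

lemma mul_mem_decomposables {p q : ℕ} (hp : 0 < p) (hq : 0 < q) (hpq : p + q = m) {a b : A}
    (ha : a ∈ 𝒜 p) (hb : b ∈ 𝒜 q) : a * b ∈ decomposables 𝒜 m :=
  decomposables_le_iff.1 le_rfl p q hp hq hpq a ha b hb

lemma decomposables_le [SetLike.GradedMul 𝒜] : decomposables 𝒜 m ≤ 𝒜 m :=
  decomposables_le_iff.2 fun _ _ _ _ hpq _ ha _ hb => hpq ▸ SetLike.mul_mem_graded ha hb

lemma map_decomposables {π : B →ₐ[R] A}
    (hπ : ∀ i, 0 < i → i < m → (ℬ i).map π.toLinearMap = 𝒜 i) :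
    (decomposables ℬ m).map π.toLinearMap = decomposables 𝒜 m := by
  simp only [decomposables, Submodule.map_iSup, Submodule.map_mul]
  refine iSup_congr fun p => iSup_congr fun q => iSup_congr fun h => ?_
  rw [hπ p h.1 (by omega), hπ q h.2.1 (by omega)]

end Decomposables

section Bar

variable {k}

section TensorPowers

variable {V : Type} [AddCommGroup V] [Module k V] {𝒱 : ℕ → Submodule k V}

/-- The pairing `V × V^{⊗(n+1)} → V^{⊗(n+2)}`, `(v, w) ↦ v ⊗ w`. -/
def TP.cons (n : ℕ) : V →ₗ[k] ↥(TP k V (n + 1)) →ₗ[k] ↥(TP k V (n + 2)) :=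
  TensorProduct.mk k V ↥(TP k V (n + 1))

lemma omega_add_two_le_iff {n m : ℕ} {N : Submodule k ↥(TP k V (n + 2))} :
    omega k 𝒱 (n + 2) m ≤ N ↔
      ∀ p q, 0 < p → p + q = m → ∀ v ∈ 𝒱 p, ∀ w ∈ omega k 𝒱 (n + 1) q, TP.cons n v w ∈ N := by
  have hrange (p q : ℕ) : LinearMap.range (TensorProduct.map (𝒱 p).subtype
      (omega k 𝒱 (n + 1) q).subtype) ≤ N ↔
      ∀ v ∈ 𝒱 p, ∀ w ∈ omega k 𝒱 (n + 1) q, TP.cons n v w ∈ N := by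
    rw [← TensorProduct.mapIncl, TensorProduct.range_mapIncl]
    exact Submodule.map₂_le
  refine iSup₂_le_iff.trans ⟨fun h p q hp hpq => ?_, fun h p hp => ?_⟩
  · obtain rfl : q = m - p := by omega
    exact (hrange p _).1 (h p (Finset.mem_Icc.2 ⟨hp, by omega⟩))
  · rw [Finset.mem_Icc] at hp
    exact (hrange p _).2 (h p (m - p) hp.1 (by omega))

lemma omega_one_of_pos {m : ℕ} (hm : 0 < m) : omega k 𝒱 1 m = 𝒱 m :=
  if_neg hm.ne'

lemma omega_one_zero : omega k 𝒱 1 0 = ⊥ :=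
  if_pos rfl

lemma omega_two_le_iff {m : ℕ} {N : Submodule k ↥(TP k V 2)} :
    omega k 𝒱 2 m ≤ N ↔
      ∀ p q, 0 < p → 0 < q → p + q = m → ∀ v ∈ 𝒱 p, ∀ w ∈ 𝒱 q, TP.cons 0 v w ∈ N := by
  refine omega_add_two_le_iff.trans ⟨fun h p q hp hq hpq v hv w hw => ?_,
    fun h p q hp hpq v hv w hw => ?_⟩
  · exact h p q hp hpq v hv w ((omega_one_of_pos hq).ge hw)
  · obtain rfl | hq := q.eq_zero_or_pos
    · obtain rfl : w = 0 := omega_one_zero.le hw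
      rw [map_zero]
      exact N.zero_mem
    · exact h p q hp hq hpq v hv w ((omega_one_of_pos hq).le hw)

lemma cons_mem_omega_two {m p q : ℕ} (hp : 0 < p) (hq : 0 < q) (hpq : p + q = m) {v w : V}
    (hv : v ∈ 𝒱 p) (hw : w ∈ 𝒱 q) : TP.cons 0 v w ∈ omega k 𝒱 2 m :=
  omega_two_le_iff.1 le_rfl p q hp hq hpq v hv w hw

lemma omega_three_le {m : ℕ} {N : Submodule k ↥(TP k V 3)}
    (h : ∀ p q r, 0 < p → 0 < q → 0 < r → p + q + r = m →
      ∀ u ∈ 𝒱 p, ∀ v ∈ 𝒱 q, ∀ w ∈ 𝒱 r, TP.cons 1 u (TP.cons 0 v w) ∈ N) :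
    omega k 𝒱 3 m ≤ N :=
  omega_add_two_le_iff.2 fun p _ hp _ u hu =>
    omega_two_le_iff (N := N.comap (TP.cons 1 u)).2 fun q r hq hr _ v hv w hw =>
      h p q r hp hq hr (by omega) u hu v hv w hw

end TensorPowers

variable {A} {𝒜}

lemma barD_two_cons (a b : A) : barD k A 2 (TP.cons 0 a b) = (a * b : A) := by
  change (∑ i ∈ Finset.range 1, ((-1 : k) ^ i) • contract k A 0 i) (TP.cons 0 a b) = (a * b : A)
  rw [Finset.sum_range_one, pow_zero, one_smul]
  rfl

lemma barD_three_cons (a b c : A) :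
    barD k A 3 (TP.cons 1 a (TP.cons 0 b c)) =
      TP.cons 0 (a * b) c - TP.cons (k := k) 0 a (b * c : A) := by
  change (∑ i ∈ Finset.range 2, ((-1 : k) ^ i) • contract k A 1 i)
    (TP.cons 1 a (TP.cons 0 b c)) = _
  rw [Finset.sum_range_succ, Finset.sum_range_one, pow_zero, pow_one, one_smul, neg_one_smul,
    ← sub_eq_add_neg]
  rfl

lemma map_barD_two_omega (m : ℕ) :
    (omega k 𝒜 2 m).map (barD k A 2) = decomposables 𝒜 m := by
  apply le_antisymm
  · refine Submodule.map_le_iff_le_comap.2 (omega_two_le_iff.2 fun p q hp hq hpq a ha b hb => ?_)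
    change barD k A 2 (TP.cons 0 a b) ∈ decomposables 𝒜 m
    rw [barD_two_cons]
    exact mul_mem_decomposables (A := A) hp hq hpq ha hb
  · exact decomposables_le_iff.2 fun p q hp hq hpq a ha b hb =>
      ⟨TP.cons 0 a b, cons_mem_omega_two hp hq hpq ha hb, barD_two_cons a b⟩

lemma subsingleton_tor_iff {n m : ℕ} :
    Subsingleton (Tor k A 𝒜 n m) ↔
      LinearMap.ker (barD k A n) ⊓ omega k 𝒜 n m ≤
        (omega k 𝒜 (n + 1) m).map (barD k A (n + 1)) := by
  rw [Submodule.Quotient.subsingleton_iff, Submodule.comap_subtype_eq_top]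

lemma subsingleton_tor_one_iff {m : ℕ} (hm : 0 < m) :
    Subsingleton (Tor k A 𝒜 1 m) ↔ 𝒜 m ≤ decomposables 𝒜 m := by
  have hcycles : LinearMap.ker (barD k A 1) ⊓ omega k 𝒜 1 m = 𝒜 m := by
    rw [omega_one_of_pos hm]
    exact inf_eq_right.2 fun _ _ => rfl
  rw [subsingleton_tor_iff, hcycles]
  exact iff_of_eq (congrArg (𝒜 m ≤ ·) (map_barD_two_omega m))

lemma subsingleton_tor_one_of_eq_pow {m : ℕ} (hm : 2 ≤ m)
    (hpow : ∀ n, 1 ≤ n → 𝒜 n = 𝒜 1 ^ n) : Subsingleton (Tor k A 𝒜 1 m) := by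
  obtain ⟨n, rfl⟩ := Nat.exists_eq_add_of_le' hm
  rw [subsingleton_tor_one_iff (by omega)]
  calc 𝒜 (n + 2) = 𝒜 1 * 𝒜 (n + 1) := by
        rw [hpow (n + 2) (by omega), hpow (n + 1) (by omega), ← pow_succ']
    _ ≤ decomposables 𝒜 (n + 2) := Submodule.mul_le.2 fun a ha b hb =>
        mul_mem_decomposables one_pos n.succ_pos (by omega) ha hb

theorem exists_linearMap_mul_eq_of_subsingleton_tor_two {U : Type*} [AddCommGroup U] [Module k U]
    {m : ℕ} (htor : Subsingleton (Tor k A 𝒜 2 m)) {Φ : A →ₗ[k] A →ₗ[k] U}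
    (hΦ : ∀ p q r, 0 < p → 0 < q → 0 < r → p + q + r = m →
      ∀ a ∈ 𝒜 p, ∀ b ∈ 𝒜 q, ∀ c ∈ 𝒜 r, Φ (a * b) c = Φ a (b * c)) :
    ∃ s : A →ₗ[k] U, ∀ p q, 0 < p → 0 < q → p + q = m →
      ∀ a ∈ 𝒜 p, ∀ b ∈ 𝒜 q, s (a * b) = Φ a b := by
  let Φ₂ : ↥(TP k A 2) →ₗ[k] U := TensorProduct.lift Φ
  have hΦ₂ (a b : A) : Φ₂ (TP.cons 0 a b) = Φ a b := rfl
  have hboundaries : (omega k 𝒜 3 m).map (barD k A 3) ≤ LinearMap.ker Φ₂ := by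
    refine Submodule.map_le_iff_le_comap.2 (omega_three_le
      fun p q r hp hq hr hpqr a ha b hb c hc => ?_)
    rw [Submodule.mem_comap, barD_three_cons, LinearMap.mem_ker]
    refine (map_sub Φ₂ _ _).trans ?_
    rw [hΦ₂, hΦ₂, hΦ p q r hp hq hr hpqr a ha b hb c hc, sub_self]
  obtain ⟨s, hs⟩ := exists_linearMap_comp_eqOn ((subsingleton_tor_iff.1 htor).trans hboundaries)
  refine ⟨s, fun p q hp hq hpq a ha b hb => ?_⟩
  have hab := hs _ (cons_mem_omega_two hp hq hpq ha hb)
  rwa [barD_two_cons, hΦ₂] at hab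

end Bar

section Comparison

variable {k A 𝒜 B} {ℬ : ℕ → Submodule k B} {π : B →ₐ[k] A} {m : ℕ}

lemma map_mul_of_leftInvOn [SetLike.GradedMul ℬ] {σ : A → B} {p q : ℕ}
    (hp : Set.SurjOn π (ℬ p) (𝒜 p)) (hq : Set.SurjOn π (ℬ q) (𝒜 q))
    (hσp : Set.LeftInvOn σ π (ℬ p)) (hσq : Set.LeftInvOn σ π (ℬ q))
    (hσpq : Set.LeftInvOn σ π (ℬ (p + q))) {a b : A} (ha : a ∈ 𝒜 p) (hb : b ∈ 𝒜 q) :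
    σ (a * b) = σ a * σ b := by
  obtain ⟨a', ha', rfl⟩ := hp ha
  obtain ⟨b', hb', rfl⟩ := hq hb
  rw [← map_mul, hσpq (SetLike.mul_mem_graded ha' hb'), hσp ha', hσq hb']

theorem injOn_decomposables_of_subsingleton_tor_two [DirectSum.Decomposition 𝒜]
    [SetLike.GradedMul ℬ] (hbij : ∀ i, 0 < i → i < m → Set.BijOn π (ℬ i) (𝒜 i))
    (htor : Subsingleton (Tor k A 𝒜 2 m)) : Set.InjOn π (decomposables ℬ m) := by
  obtain ⟨σ, hσ⟩ : ∃ σ : A →ₗ[k] B, ∀ i ∈ Set.Ioo 0 m, Set.LeftInvOn σ π (ℬ i) :=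
    exists_linearMap_leftInvOn_graded 𝒜 (f := π.toLinearMap)
      (fun i hi => (hbij i hi.1 hi.2).mapsTo) (fun i hi => (hbij i hi.1 hi.2).injOn)
  have hσ_mul {p q : ℕ} (hp : 0 < p) (hq : 0 < q) (hpq : p + q < m) {a b : A}
      (ha : a ∈ 𝒜 p) (hb : b ∈ 𝒜 q) : σ (a * b) = σ a * σ b :=
    map_mul_of_leftInvOn (hbij p hp (by omega)).surjOn (hbij q hq (by omega)).surjOn
      (hσ p ⟨hp, by omega⟩) (hσ q ⟨hq, by omega⟩) (hσ (p + q) ⟨by omega, hpq⟩) ha hb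
  obtain ⟨s, hs⟩ := exists_linearMap_mul_eq_of_subsingleton_tor_two htor
    (Φ := (LinearMap.mul k B).compl₁₂ σ σ) fun p q r hp hq hr hpqr a ha b hb c hc => by
      simp only [LinearMap.compl₁₂_apply, LinearMap.mul_apply']
      rw [hσ_mul hp hq (by omega) ha hb, hσ_mul hq hr (by omega) hb hc, mul_assoc]
  have hsπ : decomposables ℬ m ≤ LinearMap.eqLocus (s ∘ₗ π.toLinearMap) LinearMap.id :=
    decomposables_le_iff.2 fun p q hp hq hpq b hb c hc => calc
      s (π (b * c)) = s (π b * π c) := by rw [map_mul]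
      _ = σ (π b) * σ (π c) :=
        hs p q hp hq hpq _ ((hbij p hp (by omega)).mapsTo hb) _ ((hbij q hq (by omega)).mapsTo hc)
      _ = b * c := by rw [hσ p ⟨hp, by omega⟩ hb, hσ q ⟨hq, by omega⟩ hc]
  exact Set.LeftInvOn.injOn (f₁' := s) hsπ

end Comparison

theorem statement5_general {k : Type} [Field k] {A : Type} [Ring A] [Algebra k A]
    {𝒜 : ℕ → Submodule k A} [GradedAlgebra 𝒜] {B : Type} [Ring B] [Algebra k B]
    {ℬ : ℕ → Submodule k B} [GradedAlgebra ℬ] {π : B →ₐ[k] A} {m : ℕ} (hm : 0 < m)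
    (hbij : ∀ i, 0 < i → i < m → Set.BijOn π (ℬ i) (𝒜 i))
    (htorA₁ : Subsingleton (Tor k A 𝒜 1 m)) (htorB₁ : Subsingleton (Tor k B ℬ 1 m))
    (htorA₂ : Subsingleton (Tor k A 𝒜 2 m)) : Set.BijOn π (ℬ m) (𝒜 m) := by
  have hA : decomposables 𝒜 m = 𝒜 m :=
    decomposables_le.antisymm ((subsingleton_tor_one_iff hm).1 htorA₁)
  have hB : decomposables ℬ m = ℬ m :=
    decomposables_le.antisymm ((subsingleton_tor_one_iff hm).1 htorB₁)
  have hmap : (decomposables ℬ m).map π.toLinearMap = decomposables 𝒜 m :=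
    map_decomposables fun i hi him => SetLike.coe_injective (hbij i hi him).image_eq
  rw [← hA, ← hB, ← hmap]
  exact (injOn_decomposables_of_subsingleton_tor_two hbij htorA₂).bijOn_image

/-- **Statement 5.** Let `π : B → A` be a morphism of connected strongly graded `k`-algebras
whose components `πⁱ : Bⁱ → Aⁱ` are bijective for `0 ≤ i < m`, where `m ≥ 2`.
If `Tor^A_{2,m}(k,k) = 0` then `πᵐ : Bᵐ → Aᵐ` is bijective. -/
theorem statement5 [GradedAlgebra 𝒜] (hA0 : 𝒜 0 = 1)
    (hAstrong : ∀ n : ℕ, 1 ≤ n → 𝒜 n = 𝒜 1 ^ n)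
    (ℬ : ℕ → Submodule k B) [GradedAlgebra ℬ] (hB0 : ℬ 0 = 1)
    (hBstrong : ∀ n : ℕ, 1 ≤ n → ℬ n = ℬ 1 ^ n)
    (π : B →ₐ[k] A) (hπ : ∀ n : ℕ, ∀ x ∈ ℬ n, π x ∈ 𝒜 n)
    (m : ℕ) (hm : 2 ≤ m)
    (hbij : ∀ i : ℕ, i < m →
      Function.Bijective (fun x : ↥(ℬ i) => (⟨π x, hπ i x x.2⟩ : ↥(𝒜 i))))
    (htor : Subsingleton (Tor k A 𝒜 2 m)) :
    Function.Bijective (fun x : ↥(ℬ m) => (⟨π x, hπ m x x.2⟩ : ↥(𝒜 m))) := by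
  refine (bijective_restrict_iff_bijOn (hπ m)).2 ?_
  exact statement5_general (by omega)
    (fun i _ him => (bijective_restrict_iff_bijOn (hπ i)).1 (hbij i him))
    (subsingleton_tor_one_of_eq_pow hm hAstrong) (subsingleton_tor_one_of_eq_pow hm hBstrong) htor

end Koszul
end
end

section
/- Let C be a connected strongly graded k-coalgebra and let (X, ρ) be a graded right C-comodule. Then for all integers 0 ≤ j ≤ i < m, Ker(ρ_{i,m−i} : X_m → X_i ⊗ C_{m−i}) ⊆ Ker(ρ_{j,m−j} : X_m → X_j ⊗ C_{m−j}). -/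
/-!
Coassociativity of `ρ` in tridegree `(j, a, b)` reads
`(ρ_{j,a} ⊗ id) ∘ ρ_{j+a,b} = (id ⊗ Δ_{a,b}) ∘ ρ_{j,a+b}`. With `i = j + a` and `m = j + a + b`, an
element of `Ker ρ_{i,b}` is therefore sent by `ρ_{j,a+b}` into the kernel of `id ⊗ Δ_{a,b}`. That
kernel is zero, because `Δ_{a,b}` is injective on `C_{a+b}` and `X_j` is flat over `k`.
-/

open TensorProduct

noncomputable section
namespace Koszul

variable (k : Type) [Field k]
variable (C : Type) [AddCommGroup C] [Module k C] [Coalgebra k C]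
variable (𝒞 : ℕ → Submodule k C)

/-- The data of a graded right `C`-comodule structure on `X = ⊕ₙ Xₙ`: a counital and
coassociative coaction `ρ` together with its components `ρc p q : X_{p+q} → X_p ⊗ C_q`
(extended by `0` to the other homogeneous components of `X`). -/
structure GradedComoduleData (X : Type) [AddCommGroup X] [Module k X]
    (𝒳 : ℕ → Submodule k X) where
  ρ : X →ₗ[k] X ⊗[k] C
  ρc : ∀ p q : ℕ, X →ₗ[k] (↥(𝒳 p) ⊗[k] ↥(𝒞 q))
  coassoc : ∀ x, (LinearMap.rTensor C ρ) (ρ x) =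
    (TensorProduct.assoc k X C C).symm
      ((LinearMap.lTensor X (Coalgebra.comul (R := k))) (ρ x))
  counit_law : ∀ x,
    (TensorProduct.rid k X) ((LinearMap.lTensor X (Coalgebra.counit (R := k))) (ρ x)) = x
  hρc : ∀ n, ∀ x ∈ 𝒳 n, ρ x =
    ∑ p ∈ Finset.range (n+1),
      (TensorProduct.map (𝒳 p).subtype (𝒞 (n-p)).subtype) (ρc p (n-p) x)
  hρc0 : ∀ p q n, n ≠ p + q → ∀ x ∈ 𝒳 n, ρc p q x = 0

section Graded

variable {ι R E A B M : Type*} [DecidableEq ι] [CommSemiring R]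
variable [AddCommMonoid E] [Module R E] [AddCommMonoid A] [Module R A]
variable [AddCommMonoid B] [Module R B] [AddCommMonoid M] [Module R M]
variable (ℰ : ι → Submodule R E)
variable (𝒜 : ι → Submodule R A) [DirectSum.Decomposition 𝒜]
variable (ℬ : ι → Submodule R B) [DirectSum.Decomposition ℬ]

/-- The projection of a graded module onto its homogeneous piece of degree `n`, with values in that
piece (unlike `GradedAlgebra.proj`, which takes values in the whole algebra). -/
def proj (n : ι) : A →ₗ[R] 𝒜 n :=
  DirectSum.component R ι (fun n => 𝒜 n) n ∘ₗ (DirectSum.decomposeLinearEquiv 𝒜).toLinearMap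

lemma proj_comp_subtype_self (n : ι) : proj 𝒜 n ∘ₗ (𝒜 n).subtype = LinearMap.id := by
  ext x
  simp [proj, DirectSum.component.lof_self]

lemma proj_comp_subtype_of_ne {n n' : ι} (h : n' ≠ n) : proj 𝒜 n ∘ₗ (𝒜 n').subtype = 0 := by
  ext x
  simp [proj, DirectSum.component.of, h]

lemma comp_subtype_comp_proj {n : ι} {f : A →ₗ[R] M} (hf : ∀ n', n' ≠ n → ∀ x ∈ 𝒜 n', f x = 0) :
    (f ∘ₗ (𝒜 n).subtype) ∘ₗ proj 𝒜 n = f := by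
  refine DirectSum.decompose_lhom_ext 𝒜 fun n' => ?_
  rw [LinearMap.comp_assoc]
  obtain rfl | hn := eq_or_ne n' n
  · rw [proj_comp_subtype_self, LinearMap.comp_id]
  · rw [proj_comp_subtype_of_ne 𝒜 hn, LinearMap.comp_zero]
    exact LinearMap.ext fun x => (hf n' hn x x.2).symm

lemma map_proj_map_subtype_self (p q : ι) (t : 𝒜 p ⊗[R] ℬ q) :
    map (proj 𝒜 p) (proj ℬ q) (map (𝒜 p).subtype (ℬ q).subtype t) = t := by
  rw [← LinearMap.comp_apply, ← map_comp, proj_comp_subtype_self, proj_comp_subtype_self, map_id,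
    LinearMap.id_apply]

lemma map_proj_map_subtype_of_ne {p q p' q' : ι} (h : (p', q') ≠ (p, q)) (t : 𝒜 p' ⊗[R] ℬ q') :
    map (proj 𝒜 p) (proj ℬ q) (map (𝒜 p').subtype (ℬ q').subtype t) = 0 := by
  rw [← LinearMap.comp_apply, ← map_comp]
  by_cases hp : p' = p
  · have hq : q' ≠ q := fun hq => h (Prod.ext hp hq)
    rw [proj_comp_subtype_of_ne ℬ hq, map_zero_right, LinearMap.zero_apply]
  · rw [proj_comp_subtype_of_ne 𝒜 hp, map_zero_left, LinearMap.zero_apply]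

/-- The component `E → A_p ⊗ B_q` of a linear map `f : E → A ⊗ B` into a tensor product of graded
modules. It is defined on all of `E`; for a graded map it only sees the piece `E_{p+q}`. -/
def tensorComponent (f : E →ₗ[R] A ⊗[R] B) (p q : ι) : E →ₗ[R] 𝒜 p ⊗[R] ℬ q :=
  map (proj 𝒜 p) (proj ℬ q) ∘ₗ f

/-- A linear map `f : E → A ⊗ B` is graded, i.e. `f(E_n) ⊆ ⊕_{p+q=n} A_p ⊗ B_q`. This is encoded as
the vanishing on `E_n` of the components of `f` in all bidegrees `(p, q)` with `p + q ≠ n`. -/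
def IsGradedMap [Add ι] (f : E →ₗ[R] A ⊗[R] B) : Prop :=
  ∀ p q n, n ≠ p + q → ∀ x ∈ ℰ n, tensorComponent 𝒜 ℬ f p q x = 0

variable [DirectSum.Decomposition ℰ]

lemma tensorComponent_eq_of_eq_sum [AddMonoid ι] [Finset.HasAntidiagonal ι]
    {f : E →ₗ[R] A ⊗[R] B} {fc : ∀ p q, E →ₗ[R] 𝒜 p ⊗[R] ℬ q}
    (hfc : ∀ n, ∀ x ∈ ℰ n, f x = ∑ d ∈ Finset.HasAntidiagonal.antidiagonal n,
      map (𝒜 d.1).subtype (ℬ d.2).subtype (fc d.1 d.2 x))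
    (hfc_zero : ∀ p q n, n ≠ p + q → ∀ x ∈ ℰ n, fc p q x = 0) (p q : ι) :
    tensorComponent 𝒜 ℬ f p q = fc p q := by
  refine DirectSum.decompose_lhom_ext ℰ fun n => LinearMap.ext fun ⟨x, hx⟩ => ?_
  change map (proj 𝒜 p) (proj ℬ q) (f x) = fc p q x
  rw [hfc n x hx, map_sum]
  by_cases hn : n = p + q
  · rw [Finset.sum_eq_single (p, q), map_proj_map_subtype_self]
    · exact fun d _ hd => map_proj_map_subtype_of_ne 𝒜 ℬ hd _
    · exact fun hpq => absurd (Finset.HasAntidiagonal.mem_antidiagonal.2 hn.symm) hpq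
  · rw [hfc_zero p q n hn x hx]
    refine Finset.sum_eq_zero fun d hd => map_proj_map_subtype_of_ne 𝒜 ℬ ?_ _
    rintro (rfl : d = (p, q))
    exact hn (Finset.HasAntidiagonal.mem_antidiagonal.1 hd).symm

variable {ℰ 𝒜 ℬ}

lemma IsGradedMap.domRestrict_tensorComponent_comp_proj [Add ι] {f : E →ₗ[R] A ⊗[R] B}
    (hf : IsGradedMap ℰ 𝒜 ℬ f) {p q n : ι} (hn : p + q = n) :
    (tensorComponent 𝒜 ℬ f p q).domRestrict (ℰ n) ∘ₗ proj ℰ n = map (proj 𝒜 p) (proj ℬ q) ∘ₗ f :=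
  comp_subtype_comp_proj ℰ fun n' hn' => hf p q n' (hn ▸ hn')

end Graded

section Coassociative

variable {ι R C X : Type*} [DecidableEq ι] [Add ι] [CommSemiring R]
variable [AddCommMonoid C] [Module R C] [AddCommMonoid X] [Module R X]
variable {𝒞 : ι → Submodule R C} [DirectSum.Decomposition 𝒞]
variable {𝒳 : ι → Submodule R X} [DirectSum.Decomposition 𝒳]
variable {Δ : C →ₗ[R] C ⊗[R] C} {ρ : X →ₗ[R] X ⊗[R] C}

lemma assoc_comp_rTensor_comp_tensorComponent (hΔ : IsGradedMap 𝒞 𝒞 𝒞 Δ)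
    (hρ : IsGradedMap 𝒳 𝒳 𝒞 ρ)
    (hcoassoc : TensorProduct.assoc R X C C ∘ₗ ρ.rTensor C ∘ₗ ρ = Δ.lTensor X ∘ₗ ρ)
    {i j a b c : ι} (hi : j + a = i) (hc : a + b = c) :
    TensorProduct.assoc R (𝒳 j) (𝒞 a) (𝒞 b) ∘ₗ
        ((tensorComponent 𝒳 𝒞 ρ j a).domRestrict (𝒳 i)).rTensor (𝒞 b) ∘ₗ
        tensorComponent 𝒳 𝒞 ρ i b =
      ((tensorComponent 𝒞 𝒞 Δ a b).domRestrict (𝒞 c)).lTensor (𝒳 j) ∘ₗ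
        tensorComponent 𝒳 𝒞 ρ j c := by
  have hleft : ((tensorComponent 𝒳 𝒞 ρ j a).domRestrict (𝒳 i)).rTensor (𝒞 b) ∘ₗ
      tensorComponent 𝒳 𝒞 ρ i b =
        map (map (proj 𝒳 j) (proj 𝒞 a)) (proj 𝒞 b) ∘ₗ ρ.rTensor C ∘ₗ ρ := by
    change _ ∘ₗ map (proj 𝒳 i) (proj 𝒞 b) ∘ₗ ρ = _
    rw [← LinearMap.comp_assoc, LinearMap.rTensor_comp_map,
      hρ.domRestrict_tensorComponent_comp_proj hi, ← LinearMap.comp_assoc,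
      LinearMap.map_comp_rTensor]
  have hright : ((tensorComponent 𝒞 𝒞 Δ a b).domRestrict (𝒞 c)).lTensor (𝒳 j) ∘ₗ
      tensorComponent 𝒳 𝒞 ρ j c =
        map (proj 𝒳 j) (map (proj 𝒞 a) (proj 𝒞 b)) ∘ₗ Δ.lTensor X ∘ₗ ρ := by
    change _ ∘ₗ map (proj 𝒳 j) (proj 𝒞 c) ∘ₗ ρ = _
    rw [← LinearMap.comp_assoc, LinearMap.lTensor_comp_map,
      hΔ.domRestrict_tensorComponent_comp_proj hc, ← LinearMap.comp_assoc,
      LinearMap.map_comp_lTensor]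
  rw [hleft, hright, ← hcoassoc, ← LinearMap.comp_assoc, ← map_map_comp_assoc_eq,
    LinearMap.comp_assoc]

theorem statement9_general (hΔ : IsGradedMap 𝒞 𝒞 𝒞 Δ) (hρ : IsGradedMap 𝒳 𝒳 𝒞 ρ)
    (hcoassoc : TensorProduct.assoc R X C C ∘ₗ ρ.rTensor C ∘ₗ ρ = Δ.lTensor X ∘ₗ ρ)
    {i j a b c : ι} (hi : j + a = i) (hc : a + b = c) [Module.Flat R (𝒳 j)]
    (hinj : Function.Injective ((tensorComponent 𝒞 𝒞 Δ a b).domRestrict (𝒞 c))) :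
    LinearMap.ker (tensorComponent 𝒳 𝒞 ρ i b) ≤ LinearMap.ker (tensorComponent 𝒳 𝒞 ρ j c) := by
  intro x hx
  rw [LinearMap.mem_ker] at hx ⊢
  apply Module.Flat.lTensor_preserves_injective_linearMap (M := 𝒳 j) _ hinj
  have hcomp := LinearMap.congr_fun
    (assoc_comp_rTensor_comp_tensorComponent hΔ hρ hcoassoc hi hc) x
  simpa only [LinearMap.comp_apply, hx, map_zero] using hcomp.symm

end Coassociative

section Data

variable {k C 𝒞}
variable {X : Type} [AddCommGroup X] [Module k X] {𝒳 : ℕ → Submodule k X}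

lemma GradedComoduleData.assoc_comp_rTensor_comp_coaction (R : GradedComoduleData k C 𝒞 X 𝒳) :
    TensorProduct.assoc k X C C ∘ₗ R.ρ.rTensor C ∘ₗ R.ρ = Coalgebra.comul.lTensor X ∘ₗ R.ρ :=
  LinearMap.ext fun x => (LinearEquiv.eq_symm_apply _).1 (R.coassoc x)

variable [DirectSum.Decomposition 𝒞] [DirectSum.Decomposition 𝒳]

lemma GradedCoalgebraData.tensorComponent_comul (D : GradedCoalgebraData k C 𝒞) (p q : ℕ) :
    tensorComponent 𝒞 𝒞 Coalgebra.comul p q = D.Δc p q :=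
  tensorComponent_eq_of_eq_sum 𝒞 𝒞 𝒞 (fun n x hx => (D.hΔc n x hx).trans
    (Finset.Nat.sum_antidiagonal_eq_sum_range_succ
      (fun p q => map (𝒞 p).subtype (𝒞 q).subtype (D.Δc p q x)) n).symm) D.hΔc0 p q

lemma GradedCoalgebraData.isGradedMap_comul (D : GradedCoalgebraData k C 𝒞) :
    IsGradedMap 𝒞 𝒞 𝒞 (Coalgebra.comul (R := k)) := fun p q => by
  simpa only [D.tensorComponent_comul] using D.hΔc0 p q

lemma GradedCoalgebraData.Strong.injective_domRestrict_comul {D : GradedCoalgebraData k C 𝒞}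
    (hD : D.Strong) {p q n : ℕ} (hn : p + q = n) :
    Function.Injective
      ((tensorComponent 𝒞 𝒞 (Coalgebra.comul (R := k)) p q).domRestrict (𝒞 n)) := by
  subst hn
  rw [D.tensorComponent_comul, injective_iff_map_eq_zero]
  exact fun c hc => Subtype.ext (hD p q c c.2 hc)

lemma GradedComoduleData.tensorComponent_coaction (R : GradedComoduleData k C 𝒞 X 𝒳) (p q : ℕ) :
    tensorComponent 𝒳 𝒞 R.ρ p q = R.ρc p q :=
  tensorComponent_eq_of_eq_sum 𝒳 𝒳 𝒞 (fun n x hx => (R.hρc n x hx).trans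
    (Finset.Nat.sum_antidiagonal_eq_sum_range_succ
      (fun p q => map (𝒳 p).subtype (𝒞 q).subtype (R.ρc p q x)) n).symm) R.hρc0 p q

lemma GradedComoduleData.isGradedMap_coaction (R : GradedComoduleData k C 𝒞 X 𝒳) :
    IsGradedMap 𝒳 𝒳 𝒞 R.ρ := fun p q => by
  simpa only [R.tensorComponent_coaction] using R.hρc0 p q

end Data

/-- **Statement 9.** Let `C` be a connected strongly graded `k`-coalgebra and `(X, ρ)` a graded
right `C`-comodule.  For all `0 ≤ j ≤ i < m`,
`Ker (ρ_{i,m-i} : Xₘ → Xᵢ ⊗ C_{m-i}) ⊆ Ker (ρ_{j,m-j} : Xₘ → Xⱼ ⊗ C_{m-j})`. -/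
theorem statement9 [DirectSum.Decomposition 𝒞]
    (D : GradedCoalgebraData k C 𝒞) (hstrong : D.Strong)
    (X : Type) [AddCommGroup X] [Module k X] (𝒳 : ℕ → Submodule k X)
    [DirectSum.Decomposition 𝒳] (R : GradedComoduleData k C 𝒞 X 𝒳)
    (i j m : ℕ) (hji : j ≤ i) (him : i < m) :
    ∀ x ∈ 𝒳 m, R.ρc i (m - i) x = 0 → R.ρc j (m - j) x = 0 := by
  intro x _ hx
  rw [← R.tensorComponent_coaction] at hx ⊢
  have ha : j + (i - j) = i := by omega
  have hb : (i - j) + (m - i) = m - j := by omega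
  exact statement9_general D.isGradedMap_comul R.isGradedMap_coaction
    R.assoc_comp_rTensor_comp_coaction ha hb (hstrong.injective_domRestrict_comul hb) hx

end Koszul
end
end

section
/- Let C be a connected strongly graded k-coalgebra with C₀ = k·g, and let (X, ρ) be a graded right C-comodule. Then for every m ≥ 1, the set {x ∈ X_m : ρ(x) = x ⊗ g} equals ⋂_{i=0}^{m−1} Ker(ρ_{i,m−i}) and also equals Ker(ρ_{m−1,1} : X_m → X_{m−1} ⊗ C₁). -/
/-!
Projecting coassociativity to `X_i ⊗ C_a ⊗ C_b` gives
`(ρ_{i,a} ⊗ id) ρ_{i+a,b}(x) = (id ⊗ Δ_{a,b}) ρ_{i,a+b}(x)`. Over a field, tensoring with `X_i`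
keeps `Δ_{a,b}` injective, so `ρ_{i+a,b}(x) = 0` forces `ρ_{i,a+b}(x) = 0`; with `b = 1`, the single
component `ρ_{m-1,1}` controls all `ρ_{i,m-i}` with `i < m`. When these vanish, `ρ(x)` lies in
`X_m ⊗ C₀ = X_m ⊗ g`, and the counit law leaves `x ⊗ g` as the only possibility.
-/

open TensorProduct

noncomputable section
namespace Koszul

variable (k : Type) [Field k]
variable (C : Type) [AddCommGroup C] [Module k C] [Coalgebra k C]
variable (𝒞 : ℕ → Submodule k C)

section HomogeneousProjection

variable {ι R M N : Type*} [DecidableEq ι] [CommSemiring R] [AddCommMonoid M] [Module R M]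
  [AddCommMonoid N] [Module R N] (ℳ : ι → Submodule R M) [DirectSum.Decomposition ℳ]

/-- The projection of a graded module onto its homogeneous component of degree `i`, with values in
that component. -/
def homogeneousProj (i : ι) : M →ₗ[R] ↥(ℳ i) :=
  DirectSum.component R ι (fun j => ↥(ℳ j)) i ∘ₗ (DirectSum.decomposeLinearEquiv ℳ).toLinearMap

lemma homogeneousProj_of_mem_ne {i j : ι} (hji : j ≠ i) {x : M} (hx : x ∈ ℳ j) :
    homogeneousProj ℳ i x = 0 :=
  Subtype.ext (DirectSum.decompose_of_mem_ne ℳ hx hji)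

lemma homogeneousProj_comp_subtype_self (i : ι) :
    homogeneousProj ℳ i ∘ₗ (ℳ i).subtype = LinearMap.id :=
  LinearMap.ext fun x => Subtype.ext (DirectSum.decompose_of_mem_same ℳ x.2)

lemma homogeneousProj_comp_subtype_of_ne {i j : ι} (hji : j ≠ i) :
    homogeneousProj ℳ i ∘ₗ (ℳ j).subtype = 0 :=
  LinearMap.ext fun x => homogeneousProj_of_mem_ne ℳ hji x.2

lemma comp_subtype_comp_homogeneousProj {f : M →ₗ[R] N} {i : ι}
    (hf : ∀ j, j ≠ i → ∀ x ∈ ℳ j, f x = 0) :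
    (f ∘ₗ (ℳ i).subtype) ∘ₗ homogeneousProj ℳ i = f := by
  refine DirectSum.decompose_lhom_ext ℳ fun j => ?_
  rw [LinearMap.comp_assoc]
  obtain rfl | hji := eq_or_ne j i
  · rw [homogeneousProj_comp_subtype_self, LinearMap.comp_id]
  · rw [homogeneousProj_comp_subtype_of_ne ℳ hji, LinearMap.comp_zero]
    exact LinearMap.ext fun x => (hf j hji x x.2).symm

variable (𝒩 : ι → Submodule R N) [DirectSum.Decomposition 𝒩]

lemma map_homogeneousProj_map_subtype_self (p q : ι) (t : ↥(ℳ p) ⊗[R] ↥(𝒩 q)) :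
    map (homogeneousProj ℳ p) (homogeneousProj 𝒩 q) (map (ℳ p).subtype (𝒩 q).subtype t) = t := by
  rw [map_map, homogeneousProj_comp_subtype_self, homogeneousProj_comp_subtype_self, map_id,
    LinearMap.id_apply]

lemma map_homogeneousProj_map_subtype_of_ne {p q r s : ι} (h : (r, s) ≠ (p, q))
    (t : ↥(ℳ r) ⊗[R] ↥(𝒩 s)) :
    map (homogeneousProj ℳ p) (homogeneousProj 𝒩 q) (map (ℳ r).subtype (𝒩 s).subtype t) = 0 := by
  rw [map_map]
  obtain hr | hs : r ≠ p ∨ s ≠ q := by rwa [ne_eq, Prod.mk.injEq, not_and_or] at h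
  · rw [homogeneousProj_comp_subtype_of_ne ℳ hr, map_zero_left, LinearMap.zero_apply]
  · rw [homogeneousProj_comp_subtype_of_ne 𝒩 hs, map_zero_right, LinearMap.zero_apply]

end HomogeneousProjection

section TensorComponents

open Finset.HasAntidiagonal

variable {ι R M A B : Type*} [AddMonoid ι] [Finset.HasAntidiagonal ι] [CommSemiring R]
  [AddCommMonoid M] [Module R M] [AddCommMonoid A] [Module R A] [AddCommMonoid B] [Module R B]
  (ℳ : ι → Submodule R M) (𝒜 : ι → Submodule R A) (ℬ : ι → Submodule R B)

/-- The maps `fc p q` are the components `M_{p+q} → A_p ⊗ B_q`, extended by zero to the other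
degrees, of the degree-preserving map `f : M → A ⊗ B`. The comultiplication of a graded coalgebra
and the coaction of a graded comodule are both of this form. -/
structure HasTensorComponents (f : M →ₗ[R] A ⊗[R] B)
    (fc : ∀ p q : ι, M →ₗ[R] ↥(𝒜 p) ⊗[R] ↥(ℬ q)) : Prop where
  eq_sum : ∀ n, ∀ x ∈ ℳ n, f x =
    ∑ pq ∈ antidiagonal n, map (𝒜 pq.1).subtype (ℬ pq.2).subtype (fc pq.1 pq.2 x)
  eq_zero : ∀ p q n, n ≠ p + q → ∀ x ∈ ℳ n, fc p q x = 0

variable {ℳ 𝒜 ℬ} {f : M →ₗ[R] A ⊗[R] B} {fc : ∀ p q : ι, M →ₗ[R] ↥(𝒜 p) ⊗[R] ↥(ℬ q)}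
  [DecidableEq ι] [DirectSum.Decomposition ℳ]

lemma HasTensorComponents.comp_subtype_comp_homogeneousProj (h : HasTensorComponents ℳ 𝒜 ℬ f fc)
    (p q : ι) : (fc p q ∘ₗ (ℳ (p + q)).subtype) ∘ₗ homogeneousProj ℳ (p + q) = fc p q :=
  Koszul.comp_subtype_comp_homogeneousProj ℳ fun n => h.eq_zero p q n

variable [DirectSum.Decomposition 𝒜] [DirectSum.Decomposition ℬ]

lemma HasTensorComponents.map_homogeneousProj_comp (h : HasTensorComponents ℳ 𝒜 ℬ f fc)
    (p q : ι) : map (homogeneousProj 𝒜 p) (homogeneousProj ℬ q) ∘ₗ f = fc p q := by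
  refine DirectSum.decompose_lhom_ext ℳ fun n => LinearMap.ext fun ⟨x, hx⟩ => ?_
  simp only [LinearMap.comp_apply, Submodule.subtype_apply, h.eq_sum n x hx, map_sum]
  rw [Finset.sum_eq_single (p, q)
    (fun _ _ hne => map_homogeneousProj_map_subtype_of_ne 𝒜 ℬ hne _)]
  · exact map_homogeneousProj_map_subtype_self 𝒜 ℬ p q _
  · intro hpq
    have hn : n ≠ p + q := fun hn => hpq (mem_antidiagonal.2 hn.symm)
    rw [h.eq_zero p q n hn x hx, map_zero, map_zero]

end TensorComponents

variable {k C 𝒞}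

namespace GradedCoalgebraData

variable (D : GradedCoalgebraData k C 𝒞)

lemma hasTensorComponents_comul :
    HasTensorComponents 𝒞 𝒞 𝒞 (Coalgebra.comul (R := k)) D.Δc where
  eq_sum n x hx := by
    rw [D.hΔc n x hx, Finset.Nat.sum_antidiagonal_eq_sum_range_succ
      fun p q => map (𝒞 p).subtype (𝒞 q).subtype (D.Δc p q x)]
  eq_zero := D.hΔc0

lemma counit_smul_g_of_mem_zero {c : C} (hc : c ∈ 𝒞 0) : Coalgebra.counit (R := k) c • D.g = c := by
  rw [D.hC0] at hc
  obtain ⟨r, rfl⟩ := Submodule.mem_span_singleton.1 hc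
  rw [map_smul, D.hcu, smul_eq_mul, mul_one]

lemma rid_lTensor_counit_tmul_g {M N : Type*} [AddCommMonoid M] [Module k M] [AddCommMonoid N]
    [Module k N] (f : M →ₗ[k] N) (t : M ⊗[k] ↥(𝒞 0)) :
    TensorProduct.rid k N (LinearMap.lTensor N Coalgebra.counit (map f (𝒞 0).subtype t)) ⊗ₜ[k] D.g =
      map f (𝒞 0).subtype t := by
  induction t with
  | zero => simp only [map_zero, zero_tmul]
  | tmul u c =>
    rw [map_tmul, LinearMap.lTensor_tmul, rid_tmul, smul_tmul, Submodule.subtype_apply,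
      D.counit_smul_g_of_mem_zero c.2]
  | add s t hs ht => rw [map_add, map_add, map_add, add_tmul, hs, ht]

end GradedCoalgebraData

namespace GradedComoduleData

variable {X : Type} [AddCommGroup X] [Module k X] {𝒳 : ℕ → Submodule k X}
  (R : GradedComoduleData k C 𝒞 X 𝒳)

lemma hasTensorComponents_coaction : HasTensorComponents 𝒳 𝒳 𝒞 R.ρ R.ρc where
  eq_sum n x hx := by
    rw [R.hρc n x hx, Finset.Nat.sum_antidiagonal_eq_sum_range_succ
      fun p q => map (𝒳 p).subtype (𝒞 q).subtype (R.ρc p q x)]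
  eq_zero := R.hρc0

lemma coaction_eq_tmul_g_of_components_eq_zero (D : GradedCoalgebraData k C 𝒞) {m : ℕ} {x : X}
    (hx : x ∈ 𝒳 m) (h : ∀ i < m, R.ρc i (m - i) x = 0) : R.ρ x = x ⊗ₜ[k] D.g := by
  have hρ : R.ρ x = map (𝒳 m).subtype (𝒞 0).subtype (R.ρc m 0 x) := by
    rw [R.hρc m x hx, Finset.sum_range_succ, Nat.sub_self, Finset.sum_eq_zero, zero_add]
    intro i hi
    rw [h i (Finset.mem_range.1 hi), map_zero]
  have hg := D.rid_lTensor_counit_tmul_g (𝒳 m).subtype (R.ρc m 0 x)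
  rwa [← hρ, R.counit_law x, eq_comm] at hg

variable [DirectSum.Decomposition 𝒞] [DirectSum.Decomposition 𝒳]

lemma component_eq_zero_of_coaction_eq_tmul {m p : ℕ} (hmp : m ≠ p) (q : ℕ) {x : X}
    (hx : x ∈ 𝒳 m) {c : C} (h : R.ρ x = x ⊗ₜ[k] c) : R.ρc p q x = 0 := by
  rw [← R.hasTensorComponents_coaction.map_homogeneousProj_comp, LinearMap.comp_apply, h, map_tmul,
    homogeneousProj_of_mem_ne 𝒳 hmp hx, zero_tmul]

lemma coassoc_component (D : GradedCoalgebraData k C 𝒞) (i a b : ℕ) (x : X) :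
    LinearMap.rTensor (𝒞 b) (R.ρc i a ∘ₗ (𝒳 (i + a)).subtype) (R.ρc (i + a) b x) =
      (TensorProduct.assoc k (𝒳 i) (𝒞 a) (𝒞 b)).symm
        (LinearMap.lTensor (𝒳 i) (D.Δc a b ∘ₗ (𝒞 (a + b)).subtype) (R.ρc i (a + b) x)) := by
  have hρ := R.hasTensorComponents_coaction
  have hΔ := D.hasTensorComponents_comul
  have hcoassoc := congrArg
    (map (map (homogeneousProj 𝒳 i) (homogeneousProj 𝒞 a)) (homogeneousProj 𝒞 b)) (R.coassoc x)
  rw [map_map_assoc_symm, LinearMap.map_rTensor, LinearMap.map_lTensor,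
    hρ.map_homogeneousProj_comp, hΔ.map_homogeneousProj_comp,
    ← hρ.comp_subtype_comp_homogeneousProj, ← hΔ.comp_subtype_comp_homogeneousProj,
    ← LinearMap.rTensor_map, ← LinearMap.lTensor_map] at hcoassoc
  rwa [← hρ.map_homogeneousProj_comp (i + a) b, ← hρ.map_homogeneousProj_comp i (a + b)]

lemma component_eq_zero_of_component_add_eq_zero (D : GradedCoalgebraData k C 𝒞) {i a b : ℕ}
    (hΔ : ∀ c ∈ 𝒞 (a + b), D.Δc a b c = 0 → c = 0) {x : X} (h : R.ρc (i + a) b x = 0) :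
    R.ρc i (a + b) x = 0 := by
  have hinj : Function.Injective (D.Δc a b ∘ₗ (𝒞 (a + b)).subtype) :=
    (injective_iff_map_eq_zero _).2 fun c hc => Subtype.ext (hΔ c c.2 hc)
  have hcoassoc := R.coassoc_component D i a b x
  rw [h, map_zero, eq_comm, LinearEquiv.map_eq_zero_iff] at hcoassoc
  exact (injective_iff_map_eq_zero _).1
    (Module.Flat.lTensor_preserves_injective_linearMap _ hinj) _ hcoassoc

end GradedComoduleData

variable (k C 𝒞)

/-- **Statement 10.** Let `C` be a connected strongly graded `k`-coalgebra with `C₀ = k·g`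
and `(X, ρ)` a graded right `C`-comodule.  For every `m ≥ 1` and `x ∈ Xₘ`:
`ρ(x) = x ⊗ g` iff all components `ρ_{i,m-i}(x)`, `0 ≤ i ≤ m-1`, vanish, and also
iff the single component `ρ_{m-1,1}(x)` vanishes. -/
theorem statement10 [DirectSum.Decomposition 𝒞]
    (D : GradedCoalgebraData k C 𝒞) (hstrong : D.Strong)
    (X : Type) [AddCommGroup X] [Module k X] (𝒳 : ℕ → Submodule k X)
    [DirectSum.Decomposition 𝒳] (R : GradedComoduleData k C 𝒞 X 𝒳)
    (m : ℕ) (hm : 1 ≤ m) :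
    ∀ x ∈ 𝒳 m,
      ((R.ρ x = x ⊗ₜ[k] D.g ↔ ∀ i : ℕ, i < m → R.ρc i (m - i) x = 0) ∧
       (R.ρ x = x ⊗ₜ[k] D.g ↔ R.ρc (m - 1) 1 x = 0)) := by
  intro x hx
  have components_eq_zero_of_last (h : R.ρc (m - 1) 1 x = 0) (i : ℕ) (hi : i < m) :
      R.ρc i (m - i) x = 0 := by
    obtain ⟨a, rfl⟩ := Nat.exists_eq_add_of_lt hi
    rw [show i + a + 1 - i = a + 1 by lia]
    exact R.component_eq_zero_of_component_add_eq_zero D (hstrong a 1) h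
  have coaction_eq_of_components := R.coaction_eq_tmul_g_of_components_eq_zero D hx
  refine ⟨⟨fun h i hi => ?_, coaction_eq_of_components⟩,
    ⟨fun h => ?_, fun h => coaction_eq_of_components (components_eq_zero_of_last h)⟩⟩
  · exact R.component_eq_zero_of_coaction_eq_tmul hi.ne' _ hx h
  · exact R.component_eq_zero_of_coaction_eq_tmul (by lia) 1 hx h

end Koszul
end
end

section
/- Let π : C → D be a morphism of connected strongly graded k-coalgebras (a k-linear coalgebra morphism with π(Cₙ) ⊆ Dₙ for all n). Let m ≥ 2 be such that the components πᵢ : Cᵢ → Dᵢ are bijective for all 0 ≤ i < m and Ext_C^{2,m}(k,k) = 0. Then π_m : C_m → D_m is bijective. -/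
/-!
In positive degree the reduced comultiplication `Δ₊` has only components `Δ_{p,q}` with
`p, q ≥ 1`, so on `C_m` it only involves degrees strictly between `0` and `m`, where `π` has an
inverse `σ`. Strong grading makes `Δ₊` injective in degrees `≥ 2`.

If `x ∈ C_m` and `π x = 0`, then `Δ₊ x = (σ ⊗ σ)(Δ₊ (π x)) = 0`, so `x = 0`. If `y ∈ D_m`, then
`z = (σ ⊗ σ)(Δ₊ y)` is a 2-cocycle, because `Δ₊` is coassociative and `σ` commutes with it below
degree `m`. Since `Ext^{2,m} = 0`, `z = Δ₊ x` for some `x ∈ C_m`, whence `Δ₊ (π x) = Δ₊ y` and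
`π x = y`.
-/

open TensorProduct

noncomputable section
namespace Koszul

variable (k : Type) [Field k]

variable (C : Type) [AddCommGroup C] [Module k C] [Coalgebra k C]
variable (𝒞 : ℕ → Submodule k C)

section Sets

variable {α β : Type*}

lemma bijOn_of_bijective {f : α → β} {s : Set α} {t : Set β} (hmaps : Set.MapsTo f s t)
    (hf : Function.Bijective (hmaps.restrict f s t)) : Set.BijOn f s t :=
  ⟨hmaps, hmaps.restrict_inj.1 hf.1, hmaps.restrict_surjective_iff.1 hf.2⟩

end Sets

section Graded

variable {k} {ι V W : Type*} [DecidableEq ι] [AddCommGroup V] [Module k V] [AddCommGroup W]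
  [Module k W]

/-- The projection of a graded module onto its component of degree `i`, with values in that
component. -/
def componentProj (𝒱 : ι → Submodule k V) [DirectSum.Decomposition 𝒱] (i : ι) : V →ₗ[k] 𝒱 i :=
  DirectSum.component k ι (fun j => 𝒱 j) i ∘ₗ (DirectSum.decomposeLinearEquiv 𝒱).toLinearMap

lemma componentProj_of_mem_ne {𝒱 : ι → Submodule k V} [DirectSum.Decomposition 𝒱] {i j : ι}
    {x : V} (hx : x ∈ 𝒱 i) (hij : i ≠ j) : componentProj 𝒱 j x = 0 :=
  Subtype.ext (DirectSum.decompose_of_mem_ne 𝒱 hx hij)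

lemma componentProj_comp_subtype (𝒱 : ι → Submodule k V) [DirectSum.Decomposition 𝒱] (i : ι) :
    componentProj 𝒱 i ∘ₗ (𝒱 i).subtype = LinearMap.id := by
  ext1 x
  exact Subtype.ext (DirectSum.decompose_of_mem_same 𝒱 x.2)

lemma componentProj_comp_subtype_of_ne (𝒱 : ι → Submodule k V) [DirectSum.Decomposition 𝒱]
    {i j : ι} (hij : i ≠ j) : componentProj 𝒱 j ∘ₗ (𝒱 i).subtype = 0 := by
  ext1 x
  rw [LinearMap.comp_apply, Submodule.subtype_apply, componentProj_of_mem_ne x.2 hij,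
    LinearMap.zero_apply]

lemma exists_leftInvOn_of_injOn {𝒱 : ι → Submodule k V} {𝒲 : ι → Submodule k W}
    [DirectSum.Decomposition 𝒲] {f : V →ₗ[k] W} {S : Set ι}
    (hmaps : ∀ i ∈ S, Set.MapsTo f (𝒱 i) (𝒲 i)) (hinj : ∀ i ∈ S, Set.InjOn f (𝒱 i)) :
    ∃ g : W →ₗ[k] V, ∀ i ∈ S, Set.LeftInvOn g f (𝒱 i) := by
  have hcomponent : ∀ i, ∃ g : W →ₗ[k] V, i ∈ S → Set.LeftInvOn g f (𝒱 i) := by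
    intro i
    by_cases hi : i ∈ S
    · obtain ⟨g, hg⟩ := (f.domRestrict (𝒱 i)).exists_leftInverse_of_injective
        (LinearMap.ker_eq_bot.2 (hinj i hi).injective)
      exact ⟨(𝒱 i).subtype ∘ₗ g, fun _ x hx =>
        congrArg Subtype.val (LinearMap.congr_fun hg ⟨x, hx⟩)⟩
    · exact ⟨0, fun h => absurd h hi⟩
  choose g hg using hcomponent
  refine ⟨DirectSum.toModule k ι V (fun i => g i ∘ₗ (𝒲 i).subtype) ∘ₗ
    (DirectSum.decomposeLinearEquiv 𝒲).toLinearMap, fun i hi x hx => ?_⟩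
  have hdecompose : DirectSum.decomposeLinearEquiv 𝒲 (f x) =
      DirectSum.lof k ι (fun j => 𝒲 j) i ⟨f x, hmaps i hi hx⟩ :=
    DirectSum.decomposeLinearEquiv_apply_coe 𝒲 i ⟨f x, hmaps i hi hx⟩
  rw [LinearMap.comp_apply, LinearEquiv.coe_coe, hdecompose, DirectSum.toModule_lof]
  exact hg i hi hx

end Graded

section Cobar

variable {k} {A B : Type} [AddCommGroup A] [Module k A] [AddCommGroup B] [Module k B]
  {𝒜 : ℕ → Submodule k A} {ℬ : ℕ → Submodule k B}

/-- `Ω²(V, m)` as a submodule of `V ⊗ V`, to which `TP k V 2` is only definitionally equal. -/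
def omegaTwo (𝒱 : ℕ → Submodule k A) (m : ℕ) : Submodule k (A ⊗[k] A) :=
  omega k 𝒱 2 m

lemma omegaTwo_eq_span (m : ℕ) :
    omegaTwo 𝒜 m = Submodule.span k {t | ∃ p q, 0 < p ∧ 0 < q ∧ p + q = m ∧
      ∃ x ∈ 𝒜 p, ∃ y ∈ 𝒜 q, x ⊗ₜ[k] y = t} := by
  change ⨆ p ∈ Finset.Icc 1 m,
    LinearMap.range (mapIncl (𝒜 p) (if m - p = 0 then ⊥ else 𝒜 (m - p))) = _
  refine le_antisymm (iSup₂_le fun p hp => ?_) (Submodule.span_le.2 ?_)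
  · rw [Finset.mem_Icc] at hp
    rw [mapIncl, range_map_eq_span_tmul, Submodule.span_le]
    rintro _ ⟨⟨x, hx⟩, ⟨y, hy⟩, rfl⟩
    split_ifs at hy with hpm
    · simp [(Submodule.mem_bot k).1 hy]
    · exact Submodule.subset_span ⟨p, m - p, hp.1, by lia, by lia, x, hx, y, hy, rfl⟩
  · rintro _ ⟨p, q, hp, hq, rfl, x, hx, y, hy, rfl⟩
    have hy' : y ∈ if p + q - p = 0 then ⊥ else 𝒜 (p + q - p) := by
      rwa [Nat.add_sub_cancel_left, if_neg hq.ne']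
    exact Submodule.mem_iSup_of_mem p (Submodule.mem_iSup_of_mem
      (Finset.mem_Icc.2 ⟨hp, by lia⟩) ⟨⟨x, hx⟩ ⊗ₜ ⟨y, hy'⟩, rfl⟩)

lemma tmul_mem_omegaTwo {p q : ℕ} (hp : 0 < p) (hq : 0 < q) {x y : A} (hx : x ∈ 𝒜 p)
    (hy : y ∈ 𝒜 q) : x ⊗ₜ[k] y ∈ omegaTwo 𝒜 (p + q) := by
  rw [omegaTwo_eq_span]
  exact Submodule.subset_span ⟨p, q, hp, hq, rfl, x, hx, y, hy, rfl⟩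

lemma mapIncl_mem_omegaTwo {p q : ℕ} (hp : 0 < p) (hq : 0 < q) (t : 𝒜 p ⊗[k] 𝒜 q) :
    mapIncl (𝒜 p) (𝒜 q) t ∈ omegaTwo 𝒜 (p + q) := by
  induction t with
  | zero => simp only [map_zero, zero_mem]
  | tmul x y => exact tmul_mem_omegaTwo hp hq x.2 y.2
  | add s t hs ht => simpa only [map_add] using add_mem hs ht

lemma map_mem_omegaTwo {f : A →ₗ[k] B} {m : ℕ}
    (hf : ∀ i ∈ Set.Ioo 0 m, Set.MapsTo f (𝒜 i) (ℬ i)) {t : A ⊗[k] A}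
    (ht : t ∈ omegaTwo 𝒜 m) : map f f t ∈ omegaTwo ℬ m := by
  rw [omegaTwo_eq_span] at ht
  refine (Submodule.span_le (p := (omegaTwo ℬ m).comap (map f f))).2 ?_ ht
  rintro _ ⟨p, q, hp, hq, rfl, x, hx, y, hy, rfl⟩
  exact tmul_mem_omegaTwo hp hq (hf p ⟨hp, by lia⟩ hx) (hf q ⟨hq, by lia⟩ hy)

lemma map_eqOn_omegaTwo {U W : Type*} [AddCommGroup U] [Module k U] [AddCommGroup W] [Module k W]
    {f f' : A →ₗ[k] U} {g g' : A →ₗ[k] W} {m : ℕ}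
    (hf : ∀ i ∈ Set.Ioo 0 m, Set.EqOn f f' (𝒜 i))
    (hg : ∀ i ∈ Set.Ioo 0 m, Set.EqOn g g' (𝒜 i)) :
    Set.EqOn (map f g) (map f' g') (omegaTwo 𝒜 m) := by
  rw [omegaTwo_eq_span]
  refine LinearMap.eqOn_span' ?_
  rintro _ ⟨p, q, hp, hq, rfl, x, hx, y, hy, rfl⟩
  rw [map_tmul, map_tmul, hf p ⟨hp, by lia⟩ hx, hg q ⟨hq, by lia⟩ hy]

lemma cobarD_one (δ : A →ₗ[k] A ⊗[k] A) : cobarD k A δ 1 = δ :=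
  (Finset.sum_range_one _).trans (by rw [pow_zero, one_smul]; rfl)

lemma cobarD_two (δ : A →ₗ[k] A ⊗[k] A) : cobarD k A δ 2 =
    (TensorProduct.assoc k A A A).toLinearMap ∘ₗ δ.rTensor A - δ.lTensor A := by
  change ∑ i ∈ Finset.range 2, (-1 : k) ^ i • expand k A δ 1 i = _
  rw [Finset.sum_range_succ, Finset.sum_range_one, pow_zero, pow_one, one_smul, neg_one_smul,
    ← sub_eq_add_neg]
  rfl

lemma exists_eq_of_subsingleton_extGrp_two {δ : A →ₗ[k] A ⊗[k] A} {m : ℕ} (hm : 0 < m)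
    (hext : Subsingleton (ExtGrp k A 𝒜 δ 2 m)) {z : A ⊗[k] A} (hz : z ∈ omegaTwo 𝒜 m)
    (hcocycle : TensorProduct.assoc k A A A (δ.rTensor A z) = δ.lTensor A z) :
    ∃ x ∈ 𝒜 m, δ x = z := by
  have hker : z ∈ LinearMap.ker (cobarD k A δ 2) := by
    rw [cobarD_two]
    exact sub_eq_zero.2 hcocycle
  have hboundary : z ∈ (omega k 𝒜 1 m).map (cobarD k A δ 1) :=
    (Submodule.Quotient.subsingleton_iff.1 hext).ge (x := ⟨z, hker, hz⟩) trivial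
  rw [cobarD_one] at hboundary
  obtain ⟨x, hx, hxz⟩ := hboundary
  have homega : omega k 𝒜 1 m = 𝒜 m := if_neg hm.ne'
  exact ⟨x, homega.le hx, hxz⟩

end Cobar

section Reduced

variable {k} {A B : Type} [AddCommGroup A] [Module k A] [AddCommGroup B] [Module k B]
  {𝒜 : ℕ → Submodule k A} {ℬ : ℕ → Submodule k B} {δA : A →ₗ[k] A ⊗[k] A}
  {δB : B →ₗ[k] B ⊗[k] B} {π : A →ₗ[k] B} {σ : B →ₗ[k] A} {m : ℕ}

/-- `δ` maps `Vₙ` into `Ω²(V, n)` for all `n ≥ 1`, as the reduced comultiplication of a connected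
graded coalgebra does, so that it is the first differential of a cobar complex. -/
def IsReducedGraded (𝒱 : ℕ → Submodule k A) (δ : A →ₗ[k] A ⊗[k] A) : Prop :=
  ∀ n, 0 < n → Set.MapsTo δ (𝒱 n) (omegaTwo 𝒱 n)

lemma assoc_rTensor_map_of_mem_omegaTwo
    (hσ : ∀ i ∈ Set.Ioo 0 m, Set.EqOn (δA ∘ₗ σ) (map σ σ ∘ₗ δB) (ℬ i)) {t : B ⊗[k] B}
    (ht : t ∈ omegaTwo ℬ m)
    (hcocycle : TensorProduct.assoc k B B B (δB.rTensor B t) = δB.lTensor B t) :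
    TensorProduct.assoc k A A A (δA.rTensor A (map σ σ t)) = δA.lTensor A (map σ σ t) := by
  have hσσ : ∀ i ∈ Set.Ioo 0 m, Set.EqOn σ σ (ℬ i) := fun i _ => Set.eqOn_refl σ _
  calc TensorProduct.assoc k A A A (δA.rTensor A (map σ σ t))
      = TensorProduct.assoc k A A A (map (map σ σ) σ (δB.rTensor B t)) := by
        rw [LinearMap.rTensor_map, LinearMap.map_rTensor, map_eqOn_omegaTwo hσ hσσ ht]
    _ = map σ (map σ σ) (δB.lTensor B t) := by rw [← map_map_assoc, hcocycle]
    _ = δA.lTensor A (map σ σ t) := by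
        rw [LinearMap.lTensor_map, LinearMap.map_lTensor, map_eqOn_omegaTwo hσσ hσ ht]

lemma map_comp_comul_eqOn_of_leftInvOn (hδA : IsReducedGraded 𝒜 δA)
    (hπ : δB ∘ₗ π = map π π ∘ₗ δA) (hσ : ∀ i ∈ Set.Ioo 0 m, Set.LeftInvOn σ π (𝒜 i))
    {n : ℕ} (hn : n ∈ Set.Ioc 0 m) : Set.EqOn (map σ σ ∘ₗ δB ∘ₗ π) δA (𝒜 n) := by
  intro x hx
  have hid : ∀ i ∈ Set.Ioo 0 n, Set.EqOn (σ ∘ₗ π) (LinearMap.id (R := k)) (𝒜 i) :=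
    fun i hi => hσ i ⟨hi.1, hi.2.trans_le hn.2⟩
  rw [hπ, LinearMap.comp_apply, LinearMap.comp_apply, map_map,
    map_eqOn_omegaTwo hid hid (hδA n hn.1 hx), map_id, LinearMap.id_apply]

lemma surjOn_of_subsingleton_extGrp_two (hδB : IsReducedGraded ℬ δB)
    (hcoassoc : ∀ y, TensorProduct.assoc k B B B (δB.rTensor B (δB y)) = δB.lTensor B (δB y))
    (hinj : Set.InjOn δB (ℬ m)) (hπ : δB ∘ₗ π = map π π ∘ₗ δA) (hm : 0 < m)
    (hπm : Set.MapsTo π (𝒜 m) (ℬ m))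
    (hσB : ∀ i ∈ Set.Ioo 0 m, Set.MapsTo σ (ℬ i) (𝒜 i))
    (hπσ : ∀ i ∈ Set.Ioo 0 m, Set.RightInvOn σ π (ℬ i))
    (hσδ : ∀ i ∈ Set.Ioo 0 m, Set.EqOn (δA ∘ₗ σ) (map σ σ ∘ₗ δB) (ℬ i))
    (hext : Subsingleton (ExtGrp k A 𝒜 δA 2 m)) : Set.SurjOn π (𝒜 m) (ℬ m) := by
  intro y hy
  have hδy : δB y ∈ omegaTwo ℬ m := hδB m hm hy
  obtain ⟨x, hx, hxy⟩ := exists_eq_of_subsingleton_extGrp_two hm hext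
    (map_mem_omegaTwo hσB hδy) (assoc_rTensor_map_of_mem_omegaTwo hσδ hδy (hcoassoc y))
  have hid : ∀ i ∈ Set.Ioo 0 m, Set.EqOn (π ∘ₗ σ) (LinearMap.id (R := k)) (ℬ i) := hπσ
  refine ⟨x, hx, hinj (hπm hx) hy ?_⟩
  calc δB (π x) = map π π (δA x) := LinearMap.congr_fun hπ x
    _ = map (π ∘ₗ σ) (π ∘ₗ σ) (δB y) := by rw [hxy, map_map]
    _ = δB y := by rw [map_eqOn_omegaTwo hid hid hδy, map_id, LinearMap.id_apply]

theorem statement14_general [DirectSum.Decomposition ℬ] (hδA : IsReducedGraded 𝒜 δA)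
    (hδB : IsReducedGraded ℬ δB)
    (hcoassoc : ∀ y, TensorProduct.assoc k B B B (δB.rTensor B (δB y)) = δB.lTensor B (δB y))
    (hinjA : Set.InjOn δA (𝒜 m)) (hinjB : Set.InjOn δB (ℬ m))
    (hπ : δB ∘ₗ π = map π π ∘ₗ δA) (hm : 0 < m) (hπm : Set.MapsTo π (𝒜 m) (ℬ m))
    (hbij : ∀ i ∈ Set.Ioo 0 m, Set.BijOn π (𝒜 i) (ℬ i))
    (hext : Subsingleton (ExtGrp k A 𝒜 δA 2 m)) : Set.BijOn π (𝒜 m) (ℬ m) := by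
  obtain ⟨σ, hσ⟩ := exists_leftInvOn_of_injOn (fun i hi => (hbij i hi).mapsTo)
    (fun i hi => (hbij i hi).injOn)
  have hσπ : ∀ n ∈ Set.Ioc 0 m, Set.EqOn (map σ σ ∘ₗ δB ∘ₗ π) δA (𝒜 n) := fun n hn =>
    map_comp_comul_eqOn_of_leftInvOn hδA hπ hσ hn
  have hσδ : ∀ i ∈ Set.Ioo 0 m, Set.EqOn (δA ∘ₗ σ) (map σ σ ∘ₗ δB) (ℬ i) := by
    intro i hi y hy
    obtain ⟨x, hx, rfl⟩ := (hbij i hi).surjOn hy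
    exact (congrArg δA (hσ i hi hx)).trans (hσπ i ⟨hi.1, hi.2.le⟩ hx).symm
  have hinj : Set.InjOn π (𝒜 m) := fun x hx x' hx' h => hinjA hx hx' <| by
    rw [← hσπ m ⟨hm, le_rfl⟩ hx, ← hσπ m ⟨hm, le_rfl⟩ hx', LinearMap.comp_apply,
      LinearMap.comp_apply, h, LinearMap.comp_apply, LinearMap.comp_apply]
  exact ⟨hπm, hinj, surjOn_of_subsingleton_extGrp_two hδB hcoassoc hinjB hπ hm hπm
    (fun i hi => (hσ i hi).mapsTo (hbij i hi).surjOn)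
    (fun i hi => (hbij i hi).image_eq ▸ (hσ i hi).rightInvOn_image) hσδ hext⟩

end Reduced

section ConnectedCoalgebra

open Coalgebra

variable {k C 𝒞} {D : Type} [AddCommGroup D] [Module k D] [Coalgebra k D]
  {n : ℕ} {x : C}

lemma assoc_rTensor_deltaPlus (g : C) (t : C ⊗[k] C) :
    TensorProduct.assoc k C C C ((deltaPlus k C g).rTensor C t) =
      TensorProduct.assoc k C C C ((comul (R := k)).rTensor C t) - g ⊗ₜ[k] t
        - (TensorProduct.mk k C C g).lTensor C t := by
  induction t with
  | zero => simp
  | tmul a b => simp [deltaPlus]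
  | add s t hs ht => simp only [map_add, tmul_add, hs, ht]; abel

lemma lTensor_deltaPlus (g : C) (t : C ⊗[k] C) :
    (deltaPlus k C g).lTensor C t = (comul (R := k)).lTensor C t
      - (TensorProduct.mk k C C g).lTensor C t - TensorProduct.assoc k C C C (t ⊗ₜ[k] g) := by
  induction t with
  | zero => simp
  | tmul a b => simp [deltaPlus]
  | add s t hs ht => simp only [map_add, add_tmul, hs, ht]; abel

lemma deltaPlus_coassoc {g : C} (hg : comul (R := k) g = g ⊗ₜ[k] g) (x : C) :
    TensorProduct.assoc k C C C ((deltaPlus k C g).rTensor C (deltaPlus k C g x)) =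
      (deltaPlus k C g).lTensor C (deltaPlus k C g x) := by
  have hx : deltaPlus k C g x = comul x - g ⊗ₜ[k] x - x ⊗ₜ[k] g := rfl
  rw [assoc_rTensor_deltaPlus, lTensor_deltaPlus, hx]
  simp only [map_sub, coassoc_apply, LinearMap.rTensor_tmul, LinearMap.lTensor_tmul, hg,
    assoc_tmul, tmul_sub, sub_tmul, mk_apply]
  abel

lemma deltaPlus_comp_of_comul {g : C} {h : D} {π : C →ₗ[k] D}
    (hcomul : ∀ x, comul (R := k) (π x) = map π π (comul (R := k) x)) (hg : π g = h) :
    deltaPlus k D h ∘ₗ π = map π π ∘ₗ deltaPlus k C g := by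
  ext x
  simp [deltaPlus, hcomul, hg]

namespace GradedCoalgebraData

lemma eq_g_of_counit_eq_one (𝒢 : GradedCoalgebraData k C 𝒞) (hx : x ∈ 𝒞 0)
    (hε : counit (R := k) x = 1) : x = 𝒢.g := by
  rw [𝒢.hC0] at hx
  obtain ⟨c, rfl⟩ := Submodule.mem_span_singleton.1 hx
  rw [map_smul, 𝒢.hcu, smul_eq_mul, mul_one] at hε
  rw [hε, one_smul]

lemma g_mem (𝒢 : GradedCoalgebraData k C 𝒞) : 𝒢.g ∈ 𝒞 0 :=
  𝒢.hC0 ▸ Submodule.mem_span_singleton_self _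

lemma comul_eq_sum_antidiagonal (𝒢 : GradedCoalgebraData k C 𝒞) (hx : x ∈ 𝒞 n) : comul (R := k) x =
    ∑ pq ∈ Finset.HasAntidiagonal.antidiagonal n, mapIncl (𝒞 pq.1) (𝒞 pq.2) (𝒢.Δc pq.1 pq.2 x) :=
  (𝒢.hΔc n x hx).trans (Finset.Nat.sum_antidiagonal_eq_sum_range_succ
    (fun p q => mapIncl (𝒞 p) (𝒞 q) (𝒢.Δc p q x)) n).symm

lemma exists_comul_eq (𝒢 : GradedCoalgebraData k C 𝒞) (hx : x ∈ 𝒞 n) :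
    ∃ a ∈ 𝒞 n, ∃ b ∈ 𝒞 n, ∃ r ∈ omegaTwo 𝒞 n,
      comul (R := k) x = 𝒢.g ⊗ₜ[k] a + b ⊗ₜ[k] 𝒢.g + r := by
  have hmem : comul (R := k) x ∈ (𝒞 n).map (TensorProduct.mk k C C 𝒢.g) ⊔
      (𝒞 n).map ((TensorProduct.mk k C C).flip 𝒢.g) ⊔ omegaTwo 𝒞 n := by
    rw [𝒢.comul_eq_sum_antidiagonal hx]
    refine sum_mem fun ⟨p, q⟩ hpq => ?_
    obtain rfl : p + q = n := Finset.HasAntidiagonal.mem_antidiagonal.1 hpq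
    suffices hle : LinearMap.range (mapIncl (𝒞 p) (𝒞 q)) ≤ _ from
      hle (LinearMap.mem_range_self _ (𝒢.Δc p q x))
    rcases p.eq_zero_or_pos with rfl | hp
    · rw [range_mapIncl, 𝒢.hC0, Submodule.map₂_span_singleton_eq_map, zero_add]
      exact le_sup_of_le_left le_sup_left
    rcases q.eq_zero_or_pos with rfl | hq
    · rw [range_mapIncl, 𝒢.hC0, Submodule.map₂_span_singleton_eq_map_flip, add_zero]
      exact le_sup_of_le_left le_sup_right
    · rintro _ ⟨t, rfl⟩
      exact Submodule.mem_sup_right (mapIncl_mem_omegaTwo hp hq t)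
  obtain ⟨_, hab, r, hr, hx⟩ := Submodule.mem_sup.1 hmem
  obtain ⟨_, ⟨a, ha, rfl⟩, _, ⟨b, hb, rfl⟩, rfl⟩ := Submodule.mem_sup.1 hab
  exact ⟨a, ha, b, hb, r, hr, hx.symm⟩

lemma rTensor_counit_of_mem_omegaTwo (𝒢 : GradedCoalgebraData k C 𝒞) {r : C ⊗[k] C}
    (hr : r ∈ omegaTwo 𝒞 n) : (counit (R := k)).rTensor C r = 0 := by
  have h := map_eqOn_omegaTwo (f := counit (R := k)) (f' := 0) (g := LinearMap.id) (g' := .id)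
    (fun i hi x hx => 𝒢.hcounit i hi.1 x hx) (fun _ _ => Set.eqOn_refl _ _) hr
  rwa [map_zero_left] at h

lemma lTensor_counit_of_mem_omegaTwo (𝒢 : GradedCoalgebraData k C 𝒞) {r : C ⊗[k] C}
    (hr : r ∈ omegaTwo 𝒞 n) : (counit (R := k)).lTensor C r = 0 := by
  have h := map_eqOn_omegaTwo (f := LinearMap.id) (f' := .id) (g := counit (R := k)) (g' := 0)
    (fun _ _ => Set.eqOn_refl _ _) (fun i hi x hx => 𝒢.hcounit i hi.1 x hx) hr
  rwa [map_zero_right] at h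

lemma isReducedGraded_deltaPlus (𝒢 : GradedCoalgebraData k C 𝒞) :
    IsReducedGraded 𝒞 (deltaPlus k C 𝒢.g) := by
  intro n hn x hx
  obtain ⟨a, ha, b, hb, r, hr, hΔ⟩ := 𝒢.exists_comul_eq hx
  -- The counit axioms force `a = b = x` in `Δ x = g ⊗ a + b ⊗ g + r`.
  have hax : a = x := (TensorProduct.lid k C).symm.injective <| by
    simpa [hΔ, 𝒢.hcu, 𝒢.hcounit n hn b hb, 𝒢.rTensor_counit_of_mem_omegaTwo hr]
      using rTensor_counit_comul (R := k) x
  have hbx : b = x := (TensorProduct.rid k C).symm.injective <| by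
    simpa [hΔ, 𝒢.hcu, 𝒢.hcounit n hn a ha, 𝒢.lTensor_counit_of_mem_omegaTwo hr]
      using lTensor_counit_comul (R := k) x
  have hr_eq : deltaPlus k C 𝒢.g x = r := by
    change comul x - 𝒢.g ⊗ₜ[k] x - x ⊗ₜ[k] 𝒢.g = r
    rw [hΔ, hax, hbx]
    abel
  exact hr_eq ▸ hr

lemma map_componentProj_comul [DirectSum.Decomposition 𝒞] (𝒢 : GradedCoalgebraData k C 𝒞)
    {p q : ℕ} (hx : x ∈ 𝒞 (p + q)) :
    map (componentProj 𝒞 p) (componentProj 𝒞 q) (comul x) = 𝒢.Δc p q x := by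
  rw [𝒢.comul_eq_sum_antidiagonal hx, map_sum, Finset.sum_eq_single (p, q)]
  · rw [mapIncl, map_map, componentProj_comp_subtype, componentProj_comp_subtype, map_id,
      LinearMap.id_apply]
  · rintro ⟨i, j⟩ hij hne
    have hi : i ≠ p := by
      rintro rfl
      exact hne (Prod.ext rfl (Nat.add_left_cancel (Finset.HasAntidiagonal.mem_antidiagonal.1 hij)))
    rw [mapIncl, map_map, componentProj_comp_subtype_of_ne 𝒞 hi, map_zero_left,
      LinearMap.zero_apply]
  · exact fun h => (h (Finset.HasAntidiagonal.mem_antidiagonal.2 rfl)).elim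

lemma map_componentProj_deltaPlus [DirectSum.Decomposition 𝒞] (𝒢 : GradedCoalgebraData k C 𝒞)
    {p q : ℕ} (hp : 0 < p) (hq : 0 < q) (hx : x ∈ 𝒞 (p + q)) :
    map (componentProj 𝒞 p) (componentProj 𝒞 q) (deltaPlus k C 𝒢.g x) = 𝒢.Δc p q x := by
  have hg : ∀ i, 0 < i → componentProj 𝒞 i 𝒢.g = 0 := fun i hi =>
    componentProj_of_mem_ne 𝒢.g_mem hi.ne
  change map _ _ (comul x - 𝒢.g ⊗ₜ[k] x - x ⊗ₜ[k] 𝒢.g) = _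
  rw [map_sub, map_sub, map_tmul, map_tmul, hg p hp, hg q hq, zero_tmul, tmul_zero, sub_zero,
    sub_zero, 𝒢.map_componentProj_comul hx]

lemma Strong.injOn_deltaPlus [DirectSum.Decomposition 𝒞] {𝒢 : GradedCoalgebraData k C 𝒞}
    (h𝒢 : 𝒢.Strong) (hn : 2 ≤ n) : Set.InjOn (deltaPlus k C 𝒢.g) (𝒞 n) := by
  intro x hx y hy hxy
  obtain ⟨q, rfl⟩ : ∃ q, n = 1 + q := Nat.exists_eq_add_of_le (by lia)
  have hΔ : 𝒢.Δc 1 q (x - y) = 0 := by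
    rw [← 𝒢.map_componentProj_deltaPlus one_pos (by lia) (sub_mem hx hy), map_sub, hxy, sub_self,
      map_zero]
  exact sub_eq_zero.1 (h𝒢 1 q _ (sub_mem hx hy) hΔ)

end GradedCoalgebraData

end ConnectedCoalgebra

/-- **Statement 14.** Let `π : C → D` be a morphism of connected strongly graded
`k`-coalgebras whose components `πᵢ : Cᵢ → Dᵢ` are bijective for all `0 ≤ i < m`, where
`m ≥ 2`.  If `Ext_C^{2,m}(k,k) = 0`, then `πₘ : Cₘ → Dₘ` is bijective. -/
theorem statement14 [DirectSum.Decomposition 𝒞]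
    (DC : GradedCoalgebraData k C 𝒞) (hCstrong : DC.Strong)
    (D : Type) [AddCommGroup D] [Module k D] [Coalgebra k D]
    (𝒟 : ℕ → Submodule k D) [DirectSum.Decomposition 𝒟]
    (DD : GradedCoalgebraData k D 𝒟) (hDstrong : DD.Strong)
    (π : C →ₗ[k] D)
    (hcomul : ∀ x : C, Coalgebra.comul (R := k) (π x) =
      (TensorProduct.map π π) (Coalgebra.comul (R := k) x))
    (hcounit : ∀ x : C, Coalgebra.counit (R := k) (π x) = Coalgebra.counit (R := k) x)
    (hgraded : ∀ n : ℕ, ∀ x ∈ 𝒞 n, π x ∈ 𝒟 n)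
    (m : ℕ) (hm : 2 ≤ m)
    (hbij : ∀ i : ℕ, i < m →
      Function.Bijective (fun x : ↥(𝒞 i) => (⟨π x, hgraded i x x.2⟩ : ↥(𝒟 i))))
    (hext : Subsingleton (ExtGrp k C 𝒞 (deltaPlus k C DC.g) 2 m)) :
    Function.Bijective (fun x : ↥(𝒞 m) => (⟨π x, hgraded m x x.2⟩ : ↥(𝒟 m))) := by
  have hg : π DC.g = DD.g :=
    DD.eq_g_of_counit_eq_one (hgraded 0 _ DC.g_mem) ((hcounit _).trans DC.hcu)
  exact (statement14_general DC.isReducedGraded_deltaPlus DD.isReducedGraded_deltaPlus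
    (deltaPlus_coassoc DD.hgrp) (hCstrong.injOn_deltaPlus hm) (hDstrong.injOn_deltaPlus hm)
    (deltaPlus_comp_of_comul hcomul hg) (two_pos.trans_le hm) (hgraded m)
    (fun i hi => bijOn_of_bijective (hgraded i) (hbij i hi.2)) hext).bijective

end Koszul
end
end
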